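/- Let 0 < α < 1 and 0 < p < 1 be fixed. In the Poissonized model, there exist a constant C > 0 and, for each λ > 0 large, an integer k_λ with |k_λ − (log_{1/√(pq)} λ − (|ln(p/q)| / (2 ln^{3/2}(1/√(pq)))) · Φ^{-1}(α) · √(ln λ))| ≤ C, such that the probability that F̃_λ(α) ∈ {k_λ, k_λ + 1} tends to 1 as λ → ∞. -/

import Mathlib

/-!
Poissonized model for partial fillup in tries (Janson–Szpankowski).

An outcome `ω : ℕ × (ℕ → ℕ → Bool)` consists of the number `ω.1 = N` of inserted
strings and a source `ω.2` of infinitely many strings, where `ω.2 i j` is the `j`-th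
bit of the `i`-th string; the inserted strings are the strings `0, …, N-1`.  Under the
Poissonized measure, `N ~ Po(λ)` is independent of the strings, and all bits are
i.i.d. with `P(bit = 1) = p`.
-/

open MeasureTheory ProbabilityTheory Real Filter

/-- The number of strings among the first `n` (encoded in `ω`) whose first `k` bits
form the word `r ∈ {0,1}^k`. -/
def prefCount (ω : ℕ → ℕ → Bool) (n k : ℕ) (r : Fin k → Bool) : ℕ :=
  ((Finset.range n).filter fun i => ∀ j : Fin k, ω i j = r j).card

/-- `X_k`: the number of words `r ∈ {0,1}^k` that are prefixes of at least two of the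
first `n` strings. -/
def fillCount (ω : ℕ → ℕ → Bool) (n k : ℕ) : ℕ :=
  (Finset.univ.filter fun r : Fin k → Bool => 2 ≤ prefCount ω n k r).card

/-- `ν` is a probability measure on `ℕ → ℕ → Bool` under which all the bits
`ω i j` are i.i.d. with `P(bit = 1) = p` (characterized by cylinder probabilities). -/
def IIDBits (p : ℝ) (ν : Measure (ℕ → ℕ → Bool)) : Prop :=
  IsProbabilityMeasure ν ∧
    ∀ (S : Finset (ℕ × ℕ)) (b : ℕ × ℕ → Bool),
      ν {ω | ∀ s ∈ S, ω s.1 s.2 = b s} =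
        ∏ s ∈ S, ENNReal.ofReal (if b s then p else 1 - p)

/-- The Poissonized model: the number of inserted strings is `Po(λ)`, independent of the
i.i.d. source `ν` of strings. -/
noncomputable def poModel (lam : NNReal) (ν : Measure (ℕ → ℕ → Bool)) :
    Measure (ℕ × (ℕ → ℕ → Bool)) :=
  (ProbabilityTheory.poissonMeasure lam).prod ν

/-- `X_k(λ)` as a random variable on the Poissonized model: the number of words
`r ∈ {0,1}^k` that are prefixes of at least two of the `N` inserted strings. -/
def fillCountPo (k : ℕ) (ω : ℕ × (ℕ → ℕ → Bool)) : ℕ :=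
  fillCount ω.2 ω.1 k

/-- `X̄_k(λ) = X_k(λ) / 2^k`. -/
noncomputable def fracFilledPo (k : ℕ) (ω : ℕ × (ℕ → ℕ → Bool)) : ℝ :=
  (fillCountPo k ω : ℝ) / 2 ^ k

/-- The α-fillup level `F̃_λ(α) = max {k : X̄_k(λ) ≥ α}` in the Poissonized model. -/
noncomputable def fillupLevelPo (α : ℝ) (ω : ℕ × (ℕ → ℕ → Bool)) : ℕ :=
  sSup {k | α ≤ fracFilledPo k ω}

/-!
By Chebyshev, the filled fraction `X̄_k(λ)` is within `o(1 / √k)` of its mean with high probability,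
since its variance is at most `2⁻ᵏ`.  Under a uniformly random word `r`, `ln P_r` is an affine image
of a simple random walk, so the mean is the expectation of a smoothed step function of that walk.
Berry–Esseen estimates, obtained by Stein's method, therefore locate the crossing of the level `α`
up to `O(1)` in `ln λ`, and show that near it the mean drops by at least `c / √k` from one level to
the next.  Hence some `k` has mean above `α` by `ε` at `k` and below `α` by `ε` at `k + 2`, where
`ε ≍ 1 / √k` dominates the fluctuations.
-/

open scoped BigOperators

local notation "γ" => gaussianReal 0 1

local notation "φ" => gaussianPDFReal 0 1

section StandardGaussianDensity

lemma stdGaussianPDF_eq (t : ℝ) : φ t = (√(2 * π))⁻¹ * exp (-t ^ 2 / 2) := by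
  simp [gaussianPDFReal]

lemma stdGaussianPDF_pos (t : ℝ) : 0 < φ t :=
  gaussianPDFReal_pos 0 1 t one_ne_zero

lemma stdGaussianPDF_neg (t : ℝ) : φ (-t) = φ t := by
  simp [stdGaussianPDF_eq]

lemma stdGaussianPDF_abs (t : ℝ) : φ |t| = φ t := by
  simp [stdGaussianPDF_eq]

lemma stdGaussianPDF_le_of_abs_le {s t : ℝ} (h : |s| ≤ |t|) : φ t ≤ φ s := by
  rw [stdGaussianPDF_eq, stdGaussianPDF_eq]
  gcongr 2
  linarith [sq_le_sq.mpr h]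

lemma stdGaussianPDF_le_one (t : ℝ) : φ t ≤ 1 := by
  rw [stdGaussianPDF_eq]
  refine mul_le_one₀ (inv_le_one_of_one_le₀ ?_) (exp_pos _).le (exp_le_one_iff.mpr ?_)
  · rw [one_le_sqrt]
    linarith [pi_gt_three]
  · linarith [sq_nonneg t]

lemma inv_stdGaussianPDF_zero_le : (φ 0)⁻¹ ≤ 3 := by
  rw [stdGaussianPDF_eq]
  have h : √(2 * π) ≤ 3 := sqrt_le_iff.mpr ⟨by norm_num, by linarith [pi_lt_four]⟩
  simpa using h

lemma hasDerivAt_stdGaussianPDF (t : ℝ) : HasDerivAt φ (-(t * φ t)) t := by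
  have h : HasDerivAt (fun t : ℝ ↦ -t ^ 2 / 2) (-t) t :=
    ((hasDerivAt_pow 2 t).neg.div_const 2).congr_deriv (by ring)
  rw [funext stdGaussianPDF_eq]
  exact (h.exp.const_mul _).congr_deriv (by ring)

lemma continuous_stdGaussianPDF : Continuous φ :=
  continuous_iff_continuousAt.mpr fun t ↦ (hasDerivAt_stdGaussianPDF t).continuousAt

lemma tendsto_stdGaussianPDF_atTop : Tendsto φ atTop (nhds 0) := by
  have h : Tendsto (fun t : ℝ ↦ -t ^ 2 / 2) atTop atBot := by
    simp only [neg_div]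
    exact tendsto_neg_atTop_atBot.comp ((tendsto_pow_atTop two_ne_zero).atTop_div_const two_pos)
  rw [funext stdGaussianPDF_eq]
  simpa using (tendsto_exp_atBot.comp h).const_mul (√(2 * π))⁻¹

lemma mul_setIntegral_Ioi_stdGaussianPDF_le {w : ℝ} (hw : 0 ≤ w) :
    w * ∫ t in Set.Ioi w, φ t ≤ φ w := by
  have hderiv : ∀ t ∈ Set.Ici w, HasDerivAt (fun t ↦ -φ t) (t * φ t) t := fun t _ ↦
    (hasDerivAt_stdGaussianPDF t).neg.congr_deriv (neg_neg _)
  have hpos : ∀ t ∈ Set.Ioi w, 0 ≤ t * φ t := fun t ht ↦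
    mul_nonneg (hw.trans (le_of_lt ht)) (stdGaussianPDF_pos t).le
  have hlim : Tendsto (fun t ↦ -φ t) atTop (nhds 0) := by
    simpa using tendsto_stdGaussianPDF_atTop.neg
  calc w * ∫ t in Set.Ioi w, φ t = ∫ t in Set.Ioi w, w * φ t := (integral_const_mul w _).symm
    _ ≤ ∫ t in Set.Ioi w, t * φ t := by
        refine setIntegral_mono_on ((integrable_gaussianPDFReal 0 1).integrableOn.const_mul w)
          (integrableOn_Ioi_deriv_of_nonneg' hderiv hpos hlim) measurableSet_Ioi fun t ht ↦ ?_
        have := (stdGaussianPDF_pos t).le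
        gcongr
        exact le_of_lt ht
    _ = φ w := by simpa using integral_Ioi_of_hasDerivAt_of_nonneg' hderiv hpos hlim

lemma setIntegral_Ioi_stdGaussianPDF_le {w : ℝ} (hw : 0 ≤ w) :
    ∫ t in Set.Ioi w, φ t ≤ 3 * φ w := by
  have hshift : ∀ t ∈ Set.Ioi w, φ t ≤ (φ 0)⁻¹ * φ w * φ (t - w) := by
    intro t ht
    have hexp : exp (-t ^ 2 / 2) ≤ exp (-w ^ 2 / 2) * exp (-(t - w) ^ 2 / 2) := by
      rw [← exp_add, exp_le_exp]
      nlinarith [mul_nonneg hw (sub_nonneg.mpr (le_of_lt ht))]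
    rw [mul_assoc, ← div_eq_inv_mul, le_div_iff₀ (stdGaussianPDF_pos 0)]
    have hc : 0 ≤ (√(2 * π))⁻¹ * (√(2 * π))⁻¹ := by positivity
    simp only [stdGaussianPDF_eq]
    rw [zero_pow two_ne_zero, neg_zero, zero_div, exp_zero, mul_one]
    linarith [mul_le_mul_of_nonneg_left hexp hc]
  have hint : Integrable (fun t ↦ (φ 0)⁻¹ * φ w * φ (t - w)) :=
    ((integrable_gaussianPDFReal 0 1).comp_sub_right w).const_mul _
  have hpos : ∀ t, 0 ≤ (φ 0)⁻¹ * φ w * φ (t - w) := fun t ↦ by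
    have := stdGaussianPDF_pos
    exact mul_nonneg (mul_nonneg (inv_nonneg.mpr (this 0).le) (this w).le) (this _).le
  calc ∫ t in Set.Ioi w, φ t ≤ ∫ t in Set.Ioi w, (φ 0)⁻¹ * φ w * φ (t - w) :=
        setIntegral_mono_on (integrable_gaussianPDFReal 0 1).integrableOn hint.integrableOn
          measurableSet_Ioi hshift
    _ ≤ ∫ t, (φ 0)⁻¹ * φ w * φ (t - w) := setIntegral_le_integral hint (ae_of_all _ hpos)
    _ = (φ 0)⁻¹ * φ w := by
        rw [integral_const_mul, integral_sub_right_eq_self φ w,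
          integral_gaussianPDFReal_eq_one 0 one_ne_zero, mul_one]
    _ ≤ 3 * φ w :=
        mul_le_mul_of_nonneg_right inv_stdGaussianPDF_zero_le (stdGaussianPDF_pos w).le

end StandardGaussianDensity

section SteinEquation

/-- The bounded solution of Stein's equation `f' w - w * f w = H w - ∫ H dγ`, where `γ` is the
standard normal distribution. -/
noncomputable def steinSolution (H : ℝ → ℝ) (w : ℝ) : ℝ :=
  (φ w)⁻¹ * ∫ t in Set.Iic w, (H t - ∫ x, H x ∂γ) * φ t

variable {H : ℝ → ℝ}

lemma integrable_of_continuous_of_mem_Icc (hH : Continuous H) (h01 : ∀ x, H x ∈ Set.Icc 0 1)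
    (μ : Measure ℝ) [IsFiniteMeasure μ] : Integrable H μ :=
  .of_mem_Icc 0 1 hH.aemeasurable (ae_of_all _ h01)

lemma abs_sub_integral_le_one (hH : Continuous H) (h01 : ∀ x, H x ∈ Set.Icc 0 1) (w : ℝ) :
    |H w - ∫ x, H x ∂γ| ≤ 1 := by
  have hmean : ∫ x, H x ∂γ ∈ Set.Icc 0 1 := (convex_Icc 0 1).integral_mem isClosed_Icc
    (ae_of_all _ h01) (integrable_of_continuous_of_mem_Icc hH h01 _)
  exact abs_sub_le_of_le_of_le (h01 w).1 (h01 w).2 hmean.1 hmean.2 |>.trans (by norm_num)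

lemma norm_centered_mul_stdGaussianPDF_le (hH : Continuous H) (h01 : ∀ x, H x ∈ Set.Icc 0 1)
    (t : ℝ) : ‖(H t - ∫ x, H x ∂γ) * φ t‖ ≤ φ t := by
  rw [norm_mul, norm_eq_abs, norm_of_nonneg (stdGaussianPDF_pos t).le]
  exact mul_le_of_le_one_left (stdGaussianPDF_pos t).le (abs_sub_integral_le_one hH h01 t)

lemma integrable_centered_mul_stdGaussianPDF (hH : Continuous H)
    (h01 : ∀ x, H x ∈ Set.Icc 0 1) : Integrable fun t ↦ (H t - ∫ x, H x ∂γ) * φ t := by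
  refine (integrable_gaussianPDFReal 0 1).mono' ?_
    (ae_of_all _ (norm_centered_mul_stdGaussianPDF_le hH h01))
  exact ((hH.sub continuous_const).mul continuous_stdGaussianPDF).aestronglyMeasurable

lemma integral_centered_mul_stdGaussianPDF (hH : Continuous H)
    (h01 : ∀ x, H x ∈ Set.Icc 0 1) : ∫ t, (H t - ∫ x, H x ∂γ) * φ t = 0 := by
  have h : ∫ t, (H t - ∫ x, H x ∂γ) ∂γ = 0 := by
    rw [integral_sub (integrable_of_continuous_of_mem_Icc hH h01 _) (integrable_const _)]
    simp
  rw [integral_gaussianReal_eq_integral_smul one_ne_zero] at h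
  simpa only [smul_eq_mul, mul_comm] using h

lemma abs_setIntegral_centered_le (hH : Continuous H) (h01 : ∀ x, H x ∈ Set.Icc 0 1) (w : ℝ) :
    |∫ t in Set.Iic w, (H t - ∫ x, H x ∂γ) * φ t| ≤ ∫ t in Set.Ioi |w|, φ t := by
  have hbound := norm_centered_mul_stdGaussianPDF_le hH h01
  have hint := (integrable_gaussianPDFReal 0 1)
  rcases le_total 0 w with hw | hw
  · have hcompl : ∫ t in Set.Iic w, (H t - ∫ x, H x ∂γ) * φ t =
        -∫ t in Set.Ioi w, (H t - ∫ x, H x ∂γ) * φ t := by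
      have := setIntegral_compl (s := Set.Iic w) measurableSet_Iic
        (integrable_centered_mul_stdGaussianPDF hH h01)
      rw [Set.compl_Iic, integral_centered_mul_stdGaussianPDF hH h01] at this
      linarith
    rw [hcompl, abs_neg, abs_of_nonneg hw]
    exact norm_integral_le_of_norm_le hint.integrableOn (ae_of_all _ hbound)
  · rw [abs_of_nonpos hw, ← integral_comp_neg_Iic]
    simp only [stdGaussianPDF_neg]
    exact norm_integral_le_of_norm_le hint.integrableOn (ae_of_all _ hbound)

lemma hasDerivAt_steinSolution (hH : Continuous H) (h01 : ∀ x, H x ∈ Set.Icc 0 1) (w : ℝ) :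
    HasDerivAt (steinSolution H) (w * steinSolution H w + (H w - ∫ x, H x ∂γ)) w := by
  set G : ℝ → ℝ := fun t ↦ (H t - ∫ x, H x ∂γ) * φ t with hG
  have hGcont : Continuous G := (hH.sub continuous_const).mul continuous_stdGaussianPDF
  have hGint : Integrable G := integrable_centered_mul_stdGaussianPDF hH h01
  have hprimitive : HasDerivAt (fun w ↦ ∫ t in Set.Iic w, G t) (G w) w := by
    have hsplit : (fun w ↦ ∫ t in Set.Iic w, G t) =
        fun w ↦ (∫ t in Set.Iic 0, G t) + ∫ t in (0 : ℝ)..w, G t := by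
      funext w
      rw [← intervalIntegral.integral_Iic_sub_Iic hGint.integrableOn hGint.integrableOn]
      ring
    rw [hsplit]
    exact (hGcont.integral_hasStrictDerivAt 0 w).hasDerivAt.const_add _
  have hφ : φ w ≠ 0 := (stdGaussianPDF_pos w).ne'
  refine (((hasDerivAt_stdGaussianPDF w).inv hφ).mul hprimitive).congr_deriv ?_
  simp only [hG, steinSolution, Pi.inv_apply]
  field_simp

lemma abs_steinSolution_le (hH : Continuous H) (h01 : ∀ x, H x ∈ Set.Icc 0 1) (w : ℝ) :
    |steinSolution H w| ≤ 3 := by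
  rw [steinSolution, abs_mul, abs_inv, abs_of_pos (stdGaussianPDF_pos w),
    inv_mul_le_iff₀ (stdGaussianPDF_pos w), mul_comm]
  calc _ ≤ ∫ t in Set.Ioi |w|, φ t := abs_setIntegral_centered_le hH h01 w
    _ ≤ 3 * φ |w| := setIntegral_Ioi_stdGaussianPDF_le (abs_nonneg w)
    _ = 3 * φ w := by rw [stdGaussianPDF_abs]

lemma abs_mul_steinSolution_le (hH : Continuous H) (h01 : ∀ x, H x ∈ Set.Icc 0 1) (w : ℝ) :
    |w * steinSolution H w| ≤ 1 := by
  rw [steinSolution, abs_mul, abs_mul, abs_inv, abs_of_pos (stdGaussianPDF_pos w),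
    mul_left_comm, inv_mul_le_iff₀ (stdGaussianPDF_pos w), mul_one]
  calc _ ≤ |w| * ∫ t in Set.Ioi |w|, φ t := by
        gcongr
        exact abs_setIntegral_centered_le hH h01 w
    _ ≤ φ |w| := mul_setIntegral_Ioi_stdGaussianPDF_le (abs_nonneg w)
    _ = φ w := stdGaussianPDF_abs w

lemma abs_mul_steinSolution_sub_le (hH : Continuous H) (h01 : ∀ x, H x ∈ Set.Icc 0 1) {M y z : ℝ}
    (hy : |y| ≤ M) (hz : |z| ≤ M) :
    |y * steinSolution H y - z * steinSolution H z| ≤ (3 + 2 * M) * |y - z| := by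
  set f := steinSolution H with hf
  have hderiv : ∀ w ∈ Set.Icc (-M) M, HasDerivWithinAt (fun w ↦ w * f w)
      (f w + w * (w * f w + (H w - ∫ x, H x ∂γ))) (Set.Icc (-M) M) w := fun w _ ↦
    ((hasDerivAt_id w).mul (hasDerivAt_steinSolution hH h01 w)).congr_deriv (by simp [hf])
      |>.hasDerivWithinAt
  refine (convex_Icc (-M) M).norm_image_sub_le_of_norm_hasDerivWithin_le hderiv (fun w hw ↦ ?_)
    (abs_le.mp hz) (abs_le.mp hy)
  have hfactor : |w * f w + (H w - ∫ x, H x ∂γ)| ≤ 2 :=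
    (abs_add_le _ _).trans (by
      linarith [abs_mul_steinSolution_le hH h01 w, abs_sub_integral_le_one hH h01 w])
  calc |f w + w * (w * f w + (H w - ∫ x, H x ∂γ))|
      ≤ |f w| + |w| * |w * f w + (H w - ∫ x, H x ∂γ)| := by
        rw [← abs_mul]
        exact abs_add_le _ _
    _ ≤ 3 + M * 2 := by
        have hwM : |w| ≤ M := abs_le.mpr hw
        gcongr
        · exact abs_steinSolution_le hH h01 w
        · exact (abs_nonneg w).trans hwM
    _ = 3 + 2 * M := by ring

/-- The Stein operator `f' w - w * f w` with `f'` replaced by the symmetric difference quotient of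
step `δ`, and `w * f w` by the mean of its values at `w + δ` and `w - δ`.  For `δ = 1 / √(n + 1)`
its expectation at a normalized sum of `n` independent signs vanishes. -/
noncomputable def discreteSteinOp (δ : ℝ) (f : ℝ → ℝ) (w : ℝ) : ℝ :=
  (f (w + δ) - f (w - δ)) / (2 * δ) - ((w + δ) * f (w + δ) + (w - δ) * f (w - δ)) / 2

lemma exists_abs_discreteSteinOp_sub_le (hH : Continuous H) (h01 : ∀ x, H x ∈ Set.Icc 0 1) {δ : ℝ}
    (hδ : 0 < δ) (w : ℝ) : ∃ c ∈ Set.Icc (w - δ) (w + δ),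
      |discreteSteinOp δ (steinSolution H) w - (H c - ∫ x, H x ∂γ)| ≤
        (3 + 2 * (|w| + δ)) * (2 * δ) := by
  set f := steinSolution H
  obtain ⟨c, hc, hslope⟩ := exists_hasDerivAt_eq_slope f _ (show w - δ < w + δ by linarith)
    (fun x _ ↦ (hasDerivAt_steinSolution hH h01 x).continuousAt.continuousWithinAt)
    (fun x _ ↦ hasDerivAt_steinSolution hH h01 x)
  have hM : ∀ y ∈ Set.Icc (w - δ) (w + δ), |y| ≤ |w| + δ := fun y hy ↦
    abs_le.mpr ⟨by linarith [neg_abs_le w, hy.1], by linarith [le_abs_self w, hy.2]⟩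
  have hnear : ∀ y ∈ Set.Icc (w - δ) (w + δ),
      |c * f c - y * f y| ≤ (3 + 2 * (|w| + δ)) * (2 * δ) := fun y hy ↦
    (abs_mul_steinSolution_sub_le hH h01 (hM c ⟨hc.1.le, hc.2.le⟩) (hM y hy)).trans (by
      gcongr
      exact abs_le.mpr ⟨by linarith [hc.1, hy.2], by linarith [hc.2, hy.1]⟩)
  refine ⟨c, ⟨hc.1.le, hc.2.le⟩, ?_⟩
  have hplus := abs_le.mp (hnear (w + δ) ⟨by linarith, le_rfl⟩)
  have hminus := abs_le.mp (hnear (w - δ) ⟨le_rfl, by linarith⟩)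
  rw [discreteSteinOp, show 2 * δ = w + δ - (w - δ) by ring, ← hslope, abs_le]
  constructor <;> linarith [hplus.1, hplus.2, hminus.1, hminus.2]

end SteinEquation

section SignSums

variable {n : ℕ}

/-- The sum of the signs encoded by a word of bits (`true` is `+1`, `false` is `-1`); for a
uniformly random word of length `n` it is the position of the simple symmetric random walk at
time `n`. -/
noncomputable def signSum (r : Fin n → Bool) : ℝ :=
  ∑ j, if r j then 1 else -1

lemma expect_cons (F : (Fin (n + 1) → Bool) → ℝ) :
    𝔼 r, F r = 𝔼 r : Fin n → Bool, (F (Fin.cons true r) + F (Fin.cons false r)) / 2 := by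
  rw [← Fintype.expect_equiv (Fin.consEquiv fun _ ↦ Bool) (fun x ↦ F (Fin.cons x.1 x.2)) F
    fun _ ↦ rfl]
  simp only [Fintype.expect_eq_sum_div_card, Fintype.sum_prod_type, Fintype.sum_bool,
    ← Finset.sum_add_distrib, ← Finset.sum_div, Fintype.card_prod, Fintype.card_bool]
  push_cast
  rw [div_div]

@[simp]
lemma signSum_cons (b : Bool) (r : Fin n → Bool) :
    signSum (Fin.cons b r : Fin (n + 1) → Bool) = (if b then 1 else -1) + signSum r := by
  simp [signSum, Fin.sum_univ_succ]

lemma expect_signSum_succ (f : ℝ → ℝ) :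
    𝔼 r : Fin (n + 1) → Bool, f (signSum r) =
      𝔼 r : Fin n → Bool, (f (signSum r + 1) + f (signSum r - 1)) / 2 := by
  rw [expect_cons]
  simp [add_comm, sub_eq_add_neg]

lemma expect_signSum_neg (f : ℝ → ℝ) :
    𝔼 r : Fin n → Bool, f (-signSum r) = 𝔼 r : Fin n → Bool, f (signSum r) := by
  refine Fintype.expect_equiv (Equiv.arrowCongr (.refl _) Equiv.boolNot) _ _ fun r ↦ ?_
  congr 1
  rw [signSum, signSum, ← Finset.sum_neg_distrib]
  exact Finset.sum_congr rfl fun j _ ↦ by cases h : r j <;> simp [h]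

/-- The zero-bias identity, which plays the role of Gaussian integration by parts. -/
lemma expect_signSum_mul_succ (f : ℝ → ℝ) :
    𝔼 r : Fin (n + 1) → Bool, signSum r * f (signSum r) =
      (n + 1) * 𝔼 r : Fin n → Bool, (f (signSum r + 1) - f (signSum r - 1)) / 2 := by
  induction n generalizing f with
  | zero => rw [expect_signSum_succ fun s ↦ s * f s]; simp [signSum, sub_eq_add_neg]
  | succ n ih =>
    have hstep (s : ℝ) : ((s + 1) * f (s + 1) + (s - 1) * f (s - 1)) / 2 =
        s * ((f (s + 1) + f (s - 1)) / 2) + (f (s + 1) - f (s - 1)) / 2 := by ring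
    rw [expect_signSum_succ fun s ↦ s * f s]
    simp only [hstep]
    rw [Finset.expect_add_distrib, ih fun s ↦ (f (s + 1) + f (s - 1)) / 2]
    have hcomm : 𝔼 r : Fin n → Bool, ((f (signSum r + 1 + 1) + f (signSum r + 1 - 1)) / 2 -
          (f (signSum r - 1 + 1) + f (signSum r - 1 - 1)) / 2) / 2 =
        𝔼 r : Fin (n + 1) → Bool, (f (signSum r + 1) - f (signSum r - 1)) / 2 := by
      rw [expect_signSum_succ fun s ↦ (f (s + 1) - f (s - 1)) / 2]
      exact Finset.expect_congr rfl fun r _ ↦ by rw [add_sub_cancel_right, sub_add_cancel]; ring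
    rw [hcomm]
    push_cast
    ring

lemma expect_signSum_sq : 𝔼 r : Fin n → Bool, signSum r ^ 2 = n := by
  cases n with
  | zero => simp [signSum]
  | succ n =>
    have h := expect_signSum_mul_succ (n := n) fun s ↦ s
    simp only [add_sub_sub_cancel, one_add_one_eq_two, div_self (two_ne_zero (α := ℝ)),
      Fintype.expect_const, ← sq] at h
    simpa using h

variable {δ : ℝ}

lemma mul_expect_abs_signSum_le_one (hδ : δ ^ 2 * (n + 1) = 1) :
    δ * 𝔼 r : Fin n → Bool, |signSum r| ≤ 1 := by
  rw [Finset.mul_expect]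
  calc 𝔼 r : Fin n → Bool, δ * |signSum r|
      ≤ 𝔼 r : Fin n → Bool, (1 / 2 + δ ^ 2 / 2 * signSum r ^ 2) :=
        Finset.expect_le_expect fun r _ ↦ by
          nlinarith [sq_nonneg (δ * |signSum r| - 1), sq_abs (signSum r)]
    _ = 1 / 2 + δ ^ 2 / 2 * n := by
        rw [Finset.expect_add_distrib, Fintype.expect_const, ← Finset.mul_expect,
          expect_signSum_sq]
    _ ≤ 1 := by nlinarith [sq_nonneg δ]

lemma expect_discreteSteinOp (hδ : δ ^ 2 * (n + 1) = 1) (f : ℝ → ℝ) :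
    𝔼 r : Fin n → Bool, discreteSteinOp δ f (δ * signSum r) = 0 := by
  have hδ0 : δ ≠ 0 := by rintro rfl; simp at hδ
  have hbias := expect_signSum_mul_succ (n := n) fun s ↦ f (δ * s)
  rw [expect_signSum_succ fun s ↦ s * f (δ * s)] at hbias
  have hop (s : ℝ) : discreteSteinOp δ f (δ * s) =
      δ⁻¹ * ((f (δ * (s + 1)) - f (δ * (s - 1))) / 2) -
        δ * (((s + 1) * f (δ * (s + 1)) + (s - 1) * f (δ * (s - 1))) / 2) := by
    simp only [discreteSteinOp, mul_add, mul_sub, mul_one]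
    field_simp
  simp only [hop]
  rw [Finset.expect_sub_distrib, ← Finset.mul_expect, ← Finset.mul_expect, hbias, sub_eq_zero,
    ← mul_assoc, inv_eq_of_mul_eq_one_right (b := δ * (n + 1)) (by linear_combination hδ)]

/-- The point where the derivative of the Stein solution equals its difference quotient is only
known to lie within `δ` of `w`; the arguments of the monotone `H` are shifted to absorb this. -/
lemma berryEsseen_signSum {H : ℝ → ℝ} (hH : Continuous H) (h01 : ∀ x, H x ∈ Set.Icc 0 1)
    (hmono : Monotone H) (hδ0 : 0 < δ) (hδ : δ ^ 2 * (n + 1) = 1) :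
    𝔼 r : Fin n → Bool, H (δ * signSum r - δ) ≤ (∫ x, H x ∂γ) + 14 * δ ∧
      (∫ x, H x ∂γ) - 14 * δ ≤ 𝔼 r : Fin n → Bool, H (δ * signSum r + δ) := by
  set μ := ∫ x, H x ∂γ
  let D (w : ℝ) : ℝ := discreteSteinOp δ (steinSolution H) w
  let err (w : ℝ) : ℝ := (3 + 2 * (|w| + δ)) * (2 * δ)
  have hD : 𝔼 r : Fin n → Bool, D (δ * signSum r) = 0 := expect_discreteSteinOp hδ _
  have herr : 𝔼 r : Fin n → Bool, err (δ * signSum r) ≤ 14 * δ := by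
    have hδ1 : δ ≤ 1 := by nlinarith [(Nat.cast_nonneg n : (0 : ℝ) ≤ n), sq_nonneg δ]
    have hlin (s : ℝ) : err (δ * s) = (6 + 4 * δ) * δ + 4 * δ * δ * |s| := by
      simp only [err, abs_mul, abs_of_pos hδ0]
      ring
    simp only [hlin]
    rw [Finset.expect_add_distrib, Fintype.expect_const, ← Finset.mul_expect]
    nlinarith [mul_expect_abs_signSum_le_one hδ]
  have hcompare (w : ℝ) : H (w - δ) ≤ μ + D w + err w ∧ μ + D w - err w ≤ H (w + δ) := by
    obtain ⟨c, hc, hle⟩ := exists_abs_discreteSteinOp_sub_le hH h01 hδ0 w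
    have := abs_le.mp hle
    exact ⟨by linarith [hmono hc.1], by linarith [hmono hc.2]⟩
  constructor
  · calc _ ≤ 𝔼 r : Fin n → Bool, (μ + D (δ * signSum r) + err (δ * signSum r)) :=
          Finset.expect_le_expect fun r _ ↦ (hcompare _).1
      _ ≤ μ + 14 * δ := by
          rw [Finset.expect_add_distrib, Finset.expect_add_distrib, Fintype.expect_const, hD]
          linarith
  · calc μ - 14 * δ
        ≤ 𝔼 r : Fin n → Bool, (μ + D (δ * signSum r) - err (δ * signSum r)) := by
          rw [Finset.expect_sub_distrib, Finset.expect_add_distrib, Fintype.expect_const, hD]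
          linarith
      _ ≤ _ := Finset.expect_le_expect fun r _ ↦ (hcompare _).2

end SignSums

section GaussianCdf

lemma cdf_gaussian_eq_setIntegral (z : ℝ) : cdf γ z = ∫ t in Set.Iic z, φ t := by
  rw [cdf_eq_real, measureReal_def, gaussianReal_apply_eq_integral _ one_ne_zero,
    ENNReal.toReal_ofReal (integral_nonneg fun t ↦ (stdGaussianPDF_pos t).le)]

lemma cdf_gaussian_sub_cdf_gaussian (x y : ℝ) : cdf γ y - cdf γ x = ∫ t in x..y, φ t := by
  have hint := integrable_gaussianPDFReal 0 1
  rw [cdf_gaussian_eq_setIntegral, cdf_gaussian_eq_setIntegral,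
    intervalIntegral.integral_Iic_sub_Iic hint.integrableOn hint.integrableOn]

lemma cdf_gaussian_sub_le {x y : ℝ} (h : x ≤ y) : cdf γ y - cdf γ x ≤ y - x := by
  rw [cdf_gaussian_sub_cdf_gaussian]
  calc ∫ t in x..y, φ t ≤ ∫ _ in x..y, (1 : ℝ) :=
        intervalIntegral.integral_mono h (continuous_stdGaussianPDF.intervalIntegrable _ _)
          intervalIntegrable_const stdGaussianPDF_le_one
    _ = y - x := by simp

lemma le_cdf_gaussian_sub {x y R : ℝ} (h : x ≤ y) (hx : -R ≤ x) (hy : y ≤ R) :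
    φ R * (y - x) ≤ cdf γ y - cdf γ x := by
  rw [cdf_gaussian_sub_cdf_gaussian]
  calc φ R * (y - x) = ∫ _ in x..y, φ R := by simp [mul_comm]
    _ ≤ ∫ t in x..y, φ t :=
        intervalIntegral.integral_mono_on h intervalIntegrable_const
          (continuous_stdGaussianPDF.intervalIntegrable _ _) fun t ht ↦
          stdGaussianPDF_le_of_abs_le <| (abs_le.mpr ⟨hx.trans ht.1, ht.2.trans hy⟩).trans
            (le_abs_self R)

lemma exists_cdf_gaussian_separation (x B : ℝ) : ∃ D, ∀ δ > 0, D * δ ≤ 1 →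
    cdf γ (x - D * δ) < cdf γ x - B * δ ∧ cdf γ x + B * δ < cdf γ (x + D * δ) := by
  have hφ := stdGaussianPDF_pos (|x| + 1)
  refine ⟨(|B| + 1) / φ (|x| + 1), fun δ hδ hD ↦ ?_⟩
  set D := (|B| + 1) / φ (|x| + 1)
  have hD0 : 0 ≤ D * δ := by positivity
  have hφD : φ (|x| + 1) * (D * δ) = (|B| + 1) * δ := by
    simp only [D]
    field_simp
  have hBδ : B * δ < (|B| + 1) * δ := by
    gcongr
    linarith [le_abs_self B]
  have hleft := le_cdf_gaussian_sub (x := x - D * δ) (y := x) (R := |x| + 1) (by linarith)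
    (by linarith [neg_abs_le x]) (by linarith [le_abs_self x])
  have hright := le_cdf_gaussian_sub (x := x) (y := x + D * δ) (R := |x| + 1) (by linarith)
    (by linarith [neg_abs_le x]) (by linarith [le_abs_self x])
  rw [sub_sub_cancel, hφD] at hleft
  rw [add_sub_cancel_left, hφD] at hright
  exact ⟨by linarith, by linarith⟩

lemma measureReal_gaussian_affine_pos (u : ℝ) {c : ℝ} (hc : 0 < c) :
    (γ).real {z | 0 < u + c * z} = cdf γ (u / c) := by
  have hmap : (γ).map (fun z ↦ -z) = γ := by simpa using gaussianReal_map_neg (μ := 0) (v := 1)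
  have : NullSingletonClass γ := nullSingletonClass_gaussianReal one_ne_zero
  calc (γ).real {z | 0 < u + c * z} = ((γ).map fun z ↦ -z).real {z | 0 < u + c * z} := by rw [hmap]
    _ = (γ).real (Set.Iio (u / c)) := by
        rw [map_measureReal_apply measurable_neg (by measurability)]
        congr 1 with z
        rw [Set.mem_preimage, Set.mem_ofPred_eq, Set.mem_Iio, lt_div_iff₀ hc]
        constructor <;> intro h <;> linarith
    _ = cdf γ (u / c) := by
        rw [cdf_eq_real]
        exact measureReal_congr Iio_ae_eq_Iic

end GaussianCdf

section Sigmoids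

/-- A continuous distribution function that differs from the unit step at `0` by an integrable
function. -/
structure IsSigmoid (h : ℝ → ℝ) : Prop where
  continuous : Continuous h
  monotone : Monotone h
  mem_Icc : ∀ y, h y ∈ Set.Icc 0 1
  integrable_sub_step : Integrable fun y ↦ h y - (Set.Ioi 0).indicator 1 y

variable {h : ℝ → ℝ}

lemma IsSigmoid.abs_integral_gaussian_sub_cdf_le (hh : IsSigmoid h) (u : ℝ) {c : ℝ} (hc : 0 < c) :
    |∫ z, h (u + c * z) ∂γ - cdf γ (u / c)| ≤
      (∫ y, |h y - (Set.Ioi 0).indicator 1 y|) / c := by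
  set g : ℝ → ℝ := fun y ↦ h y - (Set.Ioi 0).indicator 1 y with hg
  have hstep : ∀ z, (Set.Ioi (0 : ℝ)).indicator (1 : ℝ → ℝ) (u + c * z) =
      {z | 0 < u + c * z}.indicator 1 z := fun z ↦ rfl
  have hmeas : MeasurableSet {z : ℝ | 0 < u + c * z} :=
    measurableSet_lt (by fun_prop) (by fun_prop)
  have hdiff : ∫ z, h (u + c * z) ∂γ - cdf γ (u / c) = ∫ z, g (u + c * z) ∂γ := by
    simp only [hg, hstep]
    rw [integral_sub _ ((integrable_const 1).indicator hmeas), integral_indicator_one hmeas,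
      measureReal_gaussian_affine_pos u hc]
    exact integrable_of_continuous_of_mem_Icc (hh.continuous.comp (by fun_prop))
      (fun z ↦ hh.mem_Icc _) _
  have hint : Integrable fun z ↦ |g (u + c * z)| :=
    ((hh.integrable_sub_step.comp_add_left u).comp_mul_left' hc.ne').abs
  rw [hdiff, integral_gaussianReal_eq_integral_smul one_ne_zero]
  calc |∫ z, φ z • g (u + c * z)| ≤ ∫ z, |g (u + c * z)| := by
        rw [← norm_eq_abs]
        refine norm_integral_le_of_norm_le hint (ae_of_all _ fun z ↦ ?_)
        rw [norm_smul, norm_of_nonneg (stdGaussianPDF_pos z).le]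
        exact mul_le_of_le_one_left (norm_nonneg _) (stdGaussianPDF_le_one z)
    _ = (∫ y, |g y|) / c := by
        rw [Measure.integral_comp_mul_left (fun y ↦ |g (u + y)|) c,
          integral_add_left_eq_self (fun y ↦ |g y|) u, abs_of_pos (inv_pos.mpr hc), smul_eq_mul,
          inv_mul_eq_div]

lemma IsSigmoid.abs_expect_signSum_sub_cdf_le (hh : IsSigmoid h) {a : ℝ} (ha : 0 < a) (u : ℝ)
    {n : ℕ} {δ : ℝ} (hδ0 : 0 < δ) (hδ : δ ^ 2 * (n + 1) = 1) :
    |(𝔼 r : Fin n → Bool, h (u + a * signSum r)) - cdf γ (u * δ / a)| ≤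
      (15 + (∫ y, |h y - (Set.Ioi 0).indicator 1 y|) / a) * δ := by
  have hc : 0 < a / δ := by positivity
  have hcont (b : ℝ) : Continuous fun x ↦ h (b + a / δ * x) := hh.continuous.comp (by fun_prop)
  have hmono (b : ℝ) : Monotone fun x ↦ h (b + a / δ * x) := fun x y hxy ↦
    hh.monotone (by gcongr)
  have hupper :=
    (berryEsseen_signSum (hcont (u + a)) (fun _ ↦ hh.mem_Icc _) (hmono (u + a)) hδ0 hδ).1
  have hlower :=
    (berryEsseen_signSum (hcont (u - a)) (fun _ ↦ hh.mem_Icc _) (hmono (u - a)) hδ0 hδ).2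
  have hshift_up (s : ℝ) : u + a + a / δ * (δ * s - δ) = u + a * s := by field_simp; ring
  have hshift_down (s : ℝ) : u - a + a / δ * (δ * s + δ) = u + a * s := by field_simp; ring
  simp only [hshift_up] at hupper
  simp only [hshift_down] at hlower
  have hgauss_up := abs_le.mp (hh.abs_integral_gaussian_sub_cdf_le (u + a) hc)
  have hgauss_down := abs_le.mp (hh.abs_integral_gaussian_sub_cdf_le (u - a) hc)
  have hup : (u + a) / (a / δ) = u * δ / a + δ := by field_simp
  have hdown : (u - a) / (a / δ) = u * δ / a - δ := by field_simp
  rw [hup] at hgauss_up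
  rw [hdown] at hgauss_down
  have hlip_up := cdf_gaussian_sub_le (show u * δ / a ≤ u * δ / a + δ by linarith)
  have hlip_down := cdf_gaussian_sub_le (show u * δ / a - δ ≤ u * δ / a by linarith)
  rw [div_div_eq_mul_div] at hgauss_up hgauss_down
  rw [add_mul, div_mul_eq_mul_div, abs_le]
  constructor <;> linarith [hgauss_up.1, hgauss_up.2, hgauss_down.1, hgauss_down.2]

/-- The step size of the simple random walk of length `n` after normalization by `√(n + 1)`. -/
noncomputable def walkScale (n : ℕ) : ℝ := (√(n + 1))⁻¹

lemma walkScale_pos (n : ℕ) : 0 < walkScale n := by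
  unfold walkScale
  positivity

lemma walkScale_sq_mul (n : ℕ) : walkScale n ^ 2 * (n + 1) = 1 := by
  rw [walkScale, inv_pow, sq_sqrt (by positivity), inv_mul_cancel₀ (by positivity)]

lemma tendsto_walkScale : Tendsto walkScale atTop (nhds 0) :=
  (tendsto_sqrt_atTop.comp
    (tendsto_atTop_add_const_right _ 1 tendsto_natCast_atTop_atTop)).inv_tendsto_atTop

lemma eventually_mul_walkScale_le_one (D : ℝ) : ∀ᶠ n in atTop, D * walkScale n ≤ 1 := by
  have h := tendsto_walkScale.const_mul D
  rw [mul_zero] at h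
  exact h.eventually_le_const one_pos

lemma IsSigmoid.exists_location (hh : IsSigmoid h) (hbot : Tendsto h atBot (nhds 0))
    (htop : Tendsto h atTop (nhds 1)) {a : ℝ} (ha : 0 ≤ a) {α x : ℝ} (hα : 0 < α) (hα1 : α < 1)
    (hx : cdf γ x = α) : ∃ C, ∀ᶠ n : ℕ in atTop, ∀ v,
      (α ≤ 𝔼 r : Fin n → Bool, h (v + a * signSum r) → a * x / walkScale n - C ≤ v) ∧
      (𝔼 r : Fin n → Bool, h (v + a * signSum r) < α → v ≤ a * x / walkScale n + C) := by
  rcases ha.eq_or_lt with rfl | ha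
  · obtain ⟨L, hL⟩ := eventually_atBot.mp (hbot.eventually_lt_const hα)
    obtain ⟨M, hM⟩ := eventually_atTop.mp (htop.eventually_const_lt hα1)
    refine ⟨max (-L) M, .of_forall fun n v ↦ ?_⟩
    simp only [zero_mul, add_zero, Fintype.expect_const, zero_div]
    refine ⟨fun hv ↦ ?_, fun hv ↦ ?_⟩
    · have : L < v := not_le.mp fun hvL ↦ (hL v hvL).not_ge hv
      linarith [le_max_left (-L) M]
    · have : v < M := not_le.mp fun hMv ↦ (hM v hMv).not_gt hv
      linarith [le_max_right (-L) M]
  · obtain ⟨D, hD⟩ := exists_cdf_gaussian_separation x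
      (15 + (∫ y, |h y - (Set.Ioi 0).indicator 1 y|) / a)
    refine ⟨a * D, (eventually_mul_walkScale_le_one D).mono fun n hn v ↦ ?_⟩
    have hδ := walkScale_pos n
    obtain ⟨hleft, hright⟩ := hD _ hδ hn
    have hBE := abs_le.mp (hh.abs_expect_signSum_sub_cdf_le ha v hδ (walkScale_sq_mul n))
    have hadd (s : ℝ) : a * x / walkScale n + a * s = (x + s * walkScale n) * a / walkScale n := by
      field_simp
    refine ⟨fun hv ↦ ?_, fun hv ↦ ?_⟩
    · have : x - D * walkScale n < v * walkScale n / a :=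
        (monotone_cdf γ).reflect_lt (by linarith [hBE.2])
      rw [sub_eq_add_neg, ← mul_neg, hadd, div_le_iff₀ hδ, ← le_div_iff₀ ha]
      linarith
    · have : v * walkScale n / a < x + D * walkScale n :=
        (monotone_cdf γ).reflect_lt (by linarith [hBE.1])
      rw [hadd, le_div_iff₀ hδ, ← div_le_iff₀ ha]
      exact this.le

/-- The piecewise linear function rising from `0` at `0` to `1` at `1`. -/
noncomputable def unitRamp (y : ℝ) : ℝ := max 0 (min 1 y)

lemma unitRamp_of_nonpos {y : ℝ} (hy : y ≤ 0) : unitRamp y = 0 :=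
  max_eq_left ((min_le_right _ _).trans hy)

lemma unitRamp_of_one_le {y : ℝ} (hy : 1 ≤ y) : unitRamp y = 1 := by
  rw [unitRamp, min_eq_left hy, max_eq_right zero_le_one]

lemma unitRamp_mem_Icc (y : ℝ) : unitRamp y ∈ Set.Icc 0 1 :=
  ⟨le_max_left _ _, max_le zero_le_one (min_le_left _ _)⟩

lemma isSigmoid_unitRamp : IsSigmoid unitRamp where
  continuous := by unfold unitRamp; fun_prop
  monotone _ _ h := max_le_max le_rfl (min_le_min le_rfl h)
  mem_Icc := unitRamp_mem_Icc
  integrable_sub_step := by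
    have hmeas : AEStronglyMeasurable fun y ↦ unitRamp y - (Set.Ioi 0).indicator 1 y :=
      (Continuous.aestronglyMeasurable (by unfold unitRamp; fun_prop)).sub
        ((measurable_const.indicator measurableSet_Ioi).aestronglyMeasurable)
    refine ((integrable_indicator_iff measurableSet_Icc).mpr
      (integrableOn_const (C := (1 : ℝ)) (s := Set.Icc 0 1) (by simp))).mono' hmeas
      (ae_of_all _ fun y ↦ ?_)
    rcases le_or_gt y 0 with h0 | h0
    · simp [unitRamp_of_nonpos h0, h0, Set.indicator_nonneg]
    rcases le_or_gt y 1 with h1 | h1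
    · have := unitRamp_mem_Icc y
      rw [Set.indicator_of_mem (Set.mem_Ioi.mpr h0),
        Set.indicator_of_mem (Set.mem_Icc.mpr ⟨h0.le, h1⟩), norm_eq_abs, abs_le, Pi.one_apply]
      exact ⟨by linarith [this.1], by linarith [this.2]⟩
    · simp [unitRamp_of_one_le h1.le, h0, h1.not_ge]

lemma exists_pos_mul_walkScale_le_expect_unitRamp_sub {a : ℝ} (ha : 0 < a) (x R : ℝ) :
    ∃ L, 0 ≤ L ∧ ∀ᶠ n : ℕ in atTop, ∀ v, |v - a * x / walkScale n| ≤ R →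
      walkScale n ≤ 𝔼 r : Fin n → Bool,
        (unitRamp (v + L + a * signSum r) - unitRamp (v + a * signSum r)) := by
  set B := 15 + (∫ y, |unitRamp y - (Set.Ioi 0).indicator 1 y|) / a
  have hφ := stdGaussianPDF_pos (|x| + 1)
  set L := a * (2 * B + 1) / φ (|x| + 1) with hL
  have hL0 : 0 ≤ L := by positivity
  refine ⟨L, hL0, (eventually_mul_walkScale_le_one ((R + L) / a)).mono fun n hn v hv ↦ ?_⟩
  have hδ := walkScale_pos n
  have hδ1 := walkScale_sq_mul n
  set δ := walkScale n
  have hnear : |v * δ / a - x| ≤ R * δ / a := by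
    rw [show v * δ / a - x = (v - a * x / δ) * (δ / a) by field_simp, abs_mul,
      abs_of_pos (by positivity : 0 < δ / a), mul_div_assoc R]
    gcongr
  have hsplit : (R + L) / a * δ = R * δ / a + L * δ / a := by ring
  have hshift : (v + L) * δ / a = v * δ / a + L * δ / a := by ring
  have hLδ : 0 ≤ L * δ / a := by positivity
  obtain ⟨hnear₁, hnear₂⟩ := abs_le.mp hnear
  have hgrowth := le_cdf_gaussian_sub (x := v * δ / a) (y := (v + L) * δ / a) (R := |x| + 1)
    (by linarith) (by linarith [neg_abs_le x]) (by linarith [le_abs_self x])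
  have hgain : φ (|x| + 1) * ((v + L) * δ / a - v * δ / a) = (2 * B + 1) * δ := by
    rw [hshift, hL]
    field_simp
    ring
  have hBE := abs_le.mp (isSigmoid_unitRamp.abs_expect_signSum_sub_cdf_le ha v hδ hδ1)
  have hBE' := abs_le.mp (isSigmoid_unitRamp.abs_expect_signSum_sub_cdf_le ha (v + L) hδ hδ1)
  rw [Finset.expect_sub_distrib]
  linarith [hBE.2, hBE'.1]

lemma exists_pos_mul_walkScale_le_expect {d : ℝ → ℝ} (hd : Continuous d) (hpos : ∀ y, 0 < d y)
    {a : ℝ} (ha : 0 ≤ a) (x R : ℝ) : ∃ c > 0, ∀ᶠ n : ℕ in atTop, ∀ v,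
      |v - a * x / walkScale n| ≤ R →
        c * walkScale n ≤ 𝔼 r : Fin n → Bool, d (v + a * signSum r) := by
  have hlower (M : ℝ) : ∃ c > 0, ∀ y ∈ Set.Icc (-M) M, c ≤ d y :=
    isCompact_Icc.exists_forall_le' hd.continuousOn fun y _ ↦ hpos y
  rcases ha.eq_or_lt with rfl | ha
  · obtain ⟨c, hc, hcd⟩ := hlower R
    refine ⟨c, hc, (eventually_mul_walkScale_le_one 1).mono fun n hn v hv ↦ ?_⟩
    simp only [zero_mul, zero_div, sub_zero, add_zero, Fintype.expect_const] at hv ⊢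
    rw [one_mul] at hn
    exact (mul_le_of_le_one_right hc.le hn).trans (hcd v (abs_le.mp hv))
  · obtain ⟨L, hL, hramp⟩ := exists_pos_mul_walkScale_le_expect_unitRamp_sub ha x R
    obtain ⟨c, hc, hcd⟩ := hlower (L + 1)
    refine ⟨c, hc, hramp.mono fun n hn v hv ↦ ?_⟩
    have hle (y : ℝ) : c * (unitRamp (y + L) - unitRamp y) ≤ d y := by
      by_cases hy : y ∈ Set.Icc (-(L + 1)) (L + 1)
      · refine le_trans (mul_le_of_le_one_right hc.le ?_) (hcd y hy)
        linarith [(unitRamp_mem_Icc (y + L)).2, (unitRamp_mem_Icc y).1]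
      · refine le_trans (le_of_eq ?_) (hpos y).le
        rcases not_and_or.mp hy with h | h
        · rw [unitRamp_of_nonpos (by linarith), unitRamp_of_nonpos (by linarith), sub_self,
            mul_zero]
        · rw [unitRamp_of_one_le (by linarith), unitRamp_of_one_le (by linarith), sub_self,
            mul_zero]
    calc c * walkScale n ≤ c * 𝔼 r : Fin n → Bool,
          (unitRamp (v + L + a * signSum r) - unitRamp (v + a * signSum r)) := by
          gcongr
          exact hn v hv
      _ ≤ 𝔼 r : Fin n → Bool, d (v + a * signSum r) := by
          rw [Finset.mul_expect]
          refine Finset.expect_le_expect fun r _ ↦ ?_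
          rw [add_right_comm]
          exact hle _

end Sigmoids

section FillProb

/-- The probability that a Poisson variable of mean `x` is at least two. -/
noncomputable def fillProb (x : ℝ) : ℝ := 1 - (1 + x) * exp (-x)

lemma continuous_fillProb : Continuous fillProb := by
  unfold fillProb
  fun_prop

lemma strictMonoOn_fillProb : StrictMonoOn fillProb (Set.Ici 0) := by
  refine strictMonoOn_of_deriv_pos (convex_Ici 0) continuous_fillProb.continuousOn fun x hx ↦ ?_
  rw [interior_Ici] at hx
  have hderiv : HasDerivAt fillProb (x * exp (-x)) x :=
    ((((hasDerivAt_id x).const_add 1).mul (hasDerivAt_neg x).exp).const_sub 1).congr_deriv (by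
      simp only [id_eq]
      ring)
  rw [hderiv.deriv]
  exact mul_pos hx (exp_pos _)

lemma fillProb_zero : fillProb 0 = 0 := by simp [fillProb]

lemma fillProb_nonneg {x : ℝ} (hx : 0 ≤ x) : 0 ≤ fillProb x :=
  fillProb_zero.symm.le.trans
    (strictMonoOn_fillProb.monotoneOn Set.self_mem_Ici (Set.mem_Ici.mpr hx) hx)

lemma fillProb_le_one {x : ℝ} (hx : 0 ≤ x) : fillProb x ≤ 1 :=
  sub_le_self 1 (by positivity)

lemma fillProb_le_self {x : ℝ} (hx : 0 ≤ x) : fillProb x ≤ x := by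
  have := add_one_le_exp (-x)
  unfold fillProb
  nlinarith [exp_pos (-x), exp_le_one_iff.mpr (neg_nonpos.mpr hx)]

lemma one_sub_fillProb_le {x : ℝ} (hx : 0 < x) : 1 - fillProb x ≤ 2 / x := by
  have hquad := quadratic_le_exp_of_nonneg hx.le
  have heq : 1 - fillProb x = (1 + x) / exp x := by
    rw [fillProb, exp_neg]
    ring
  rw [heq, div_le_div_iff₀ (exp_pos _) hx]
  nlinarith

lemma tendsto_fillProb_atTop : Tendsto fillProb atTop (nhds 1) := by
  have hlower : Tendsto (fun x : ℝ ↦ 1 - 2 / x) atTop (nhds 1) := by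
    simpa using tendsto_const_nhds.sub
      ((tendsto_const_nhds (x := (2 : ℝ))).div_atTop (tendsto_id (x := atTop)))
  refine tendsto_of_tendsto_of_tendsto_of_le_of_le' hlower tendsto_const_nhds ?_ ?_
  · filter_upwards [eventually_gt_atTop 0] with x hx
    linarith [one_sub_fillProb_le hx]
  · filter_upwards [eventually_ge_atTop 0] with x hx using fillProb_le_one hx

lemma tendsto_fillProb_exp_atTop : Tendsto (fun y ↦ fillProb (exp y)) atTop (nhds 1) :=
  tendsto_fillProb_atTop.comp tendsto_exp_atTop

lemma tendsto_fillProb_exp_atBot : Tendsto (fun y ↦ fillProb (exp y)) atBot (nhds 0) := by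
  have h := continuous_fillProb.tendsto 0
  rw [fillProb_zero] at h
  exact h.comp tendsto_exp_atBot

lemma integrable_exp_neg_abs : Integrable fun y : ℝ ↦ exp (-|y|) := by
  refine .of_integral_ne_zero ?_
  rw [integral_comp_abs (f := fun y ↦ exp (-y)), integral_exp_neg_Ioi_zero]
  norm_num

lemma abs_fillProb_exp_sub_step_le (y : ℝ) :
    |fillProb (exp y) - (Set.Ioi 0).indicator 1 y| ≤ 2 * exp (-|y|) := by
  have hpos := exp_pos y
  rcases le_or_gt y 0 with hy | hy
  · rw [Set.indicator_of_notMem (Set.notMem_Ioi.mpr hy), sub_zero,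
      abs_of_nonneg (fillProb_nonneg hpos.le), abs_of_nonpos hy, neg_neg]
    linarith [fillProb_le_self hpos.le]
  · rw [Set.indicator_of_mem (Set.mem_Ioi.mpr hy), Pi.one_apply, abs_sub_comm,
      abs_of_nonneg (sub_nonneg.mpr (fillProb_le_one hpos.le)), abs_of_pos hy, exp_neg,
      ← div_eq_mul_inv]
    exact one_sub_fillProb_le hpos

lemma isSigmoid_fillProb_exp : IsSigmoid fun y ↦ fillProb (exp y) where
  continuous := continuous_fillProb.comp continuous_exp
  monotone _ _ h := strictMonoOn_fillProb.monotoneOn (Set.mem_Ici.mpr (exp_pos _).le)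
    (Set.mem_Ici.mpr (exp_pos _).le) (exp_le_exp.mpr h)
  mem_Icc y := ⟨fillProb_nonneg (exp_pos y).le, fillProb_le_one (exp_pos y).le⟩
  integrable_sub_step := (integrable_exp_neg_abs.const_mul 2).mono'
    ((continuous_fillProb.comp continuous_exp).aestronglyMeasurable.sub
      (measurable_const.indicator measurableSet_Ioi).aestronglyMeasurable)
    (ae_of_all _ abs_fillProb_exp_sub_step_le)

end FillProb

section MeanFill

variable {p : ℝ} {k : ℕ}

/-- `P_r`, the probability that a random string starts with the word `r`. -/
noncomputable def wordProb (p : ℝ) (r : Fin k → Bool) : ℝ :=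
  ∏ j, if r j then p else 1 - p

/-- The mean of the filled fraction `X̄_k(x)` in the Poissonized model. -/
noncomputable def meanFill (p : ℝ) (k : ℕ) (x : ℝ) : ℝ :=
  𝔼 r : Fin k → Bool, fillProb (x * wordProb p r)

/-- The decrease of the filling probability, at a word with an expected number `z` of strings, from
this word to the average over its two children. -/
noncomputable def fillDrop (p z : ℝ) : ℝ :=
  fillProb z - (fillProb (z * p) + fillProb (z * (1 - p))) / 2

lemma wordProb_cons (b : Bool) (r : Fin k → Bool) :
    wordProb p (Fin.cons b r : Fin (k + 1) → Bool) = (if b then p else 1 - p) * wordProb p r := by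
  simp [wordProb, Fin.prod_univ_succ]

lemma sum_wordProb (p : ℝ) (k : ℕ) : ∑ r : Fin k → Bool, wordProb p r = 1 := by
  have h := Fintype.sum_pow (fun b : Bool ↦ if b then p else 1 - p) k
  simpa [wordProb] using h.symm

lemma meanFill_sub_meanFill_succ (p : ℝ) (k : ℕ) (x : ℝ) :
    meanFill p k x - meanFill p (k + 1) x = 𝔼 r : Fin k → Bool, fillDrop p (x * wordProb p r) := by
  rw [meanFill, meanFill, expect_cons, ← Finset.expect_sub_distrib]
  refine Finset.expect_congr rfl fun r _ ↦ ?_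
  simp only [fillDrop, wordProb_cons, if_true, Bool.false_eq_true, if_false]
  congr 3 <;> ring_nf

variable (hp : p ∈ Set.Ioo (0 : ℝ) 1)
include hp

lemma wordProb_pos (r : Fin k → Bool) : 0 < wordProb p r :=
  Finset.prod_pos fun j _ ↦ by
    split_ifs
    exacts [hp.1, sub_pos.mpr hp.2]

lemma fillDrop_pos {z : ℝ} (hz : 0 < z) : 0 < fillDrop p z := by
  have hlt {q : ℝ} (hq : q ∈ Set.Ioo (0 : ℝ) 1) : fillProb (z * q) < fillProb z :=
    strictMonoOn_fillProb (mul_nonneg hz.le hq.1.le) hz.le (mul_lt_of_lt_one_right hz hq.2)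
  unfold fillDrop
  linarith [hlt hp, hlt (q := 1 - p) ⟨sub_pos.mpr hp.2, sub_lt_self 1 hp.1⟩]

lemma meanFill_le_div_two_pow {x : ℝ} (hx : 0 ≤ x) : meanFill p k x ≤ x / 2 ^ k := by
  calc meanFill p k x ≤ 𝔼 r : Fin k → Bool, x * wordProb p r :=
        Finset.expect_le_expect fun r _ ↦ fillProb_le_self (mul_nonneg hx (wordProb_pos hp r).le)
    _ = x / 2 ^ k := by
        simp [← Finset.mul_expect, Fintype.expect_eq_sum_div_card, sum_wordProb, div_eq_mul_inv]

lemma tendsto_meanFill_atTop (k : ℕ) : Tendsto (meanFill p k) atTop (nhds 1) := by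
  have h : Tendsto (fun x ↦ (∑ r : Fin k → Bool, fillProb (x * wordProb p r)) / 2 ^ k) atTop
      (nhds ((∑ _r : Fin k → Bool, 1) / 2 ^ k)) :=
    (tendsto_finsetSum _ fun r _ ↦ tendsto_fillProb_atTop.comp
      (tendsto_id.atTop_mul_const (wordProb_pos hp r))).div_const _
  have hsum (x : ℝ) :
      meanFill p k x = (∑ r : Fin k → Bool, fillProb (x * wordProb p r)) / 2 ^ k := by
    simp [meanFill, Fintype.expect_eq_sum_div_card]
  rw [funext hsum]
  simpa using h

end MeanFill

section Logarithmic

variable {p : ℝ} {k : ℕ}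

/-- `|ln (p / q)| / 2`, the coefficient of the random walk in the logarithm of `P_r` for a uniformly
random word `r`. -/
noncomputable def logSpread (p : ℝ) : ℝ := |log (p / (1 - p))| / 2

/-- `ln (1 / √(pq))`, the mean decrease of `ln P_r` per letter of a uniformly random word `r`. -/
noncomputable def logScale (p : ℝ) : ℝ := log (1 / √(p * (1 - p)))

/-- The deviation of `u = ln λ` from the value at which `meanFill p k λ` crosses the level `Φ(x)`,
as predicted by the central limit theorem for `ln P_r`. -/
noncomputable def levelOffset (p x : ℝ) (k : ℕ) (u : ℝ) : ℝ :=
  u - k * logScale p - logSpread p * x / walkScale k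

lemma logSpread_nonneg (p : ℝ) : 0 ≤ logSpread p := by
  unfold logSpread
  positivity

variable (hp : p ∈ Set.Ioo (0 : ℝ) 1)
include hp

lemma logScale_eq : logScale p = -(log p + log (1 - p)) / 2 := by
  have hq : 0 < 1 - p := sub_pos.mpr hp.2
  rw [logScale, one_div, log_inv, log_sqrt (mul_pos hp.1 hq).le, log_mul hp.1.ne' hq.ne', neg_div]

lemma logScale_pos : 0 < logScale p := by
  rw [logScale_eq hp]
  linarith [log_neg hp.1 hp.2, log_neg (sub_pos.mpr hp.2) (sub_lt_self 1 hp.1)]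

lemma wordProb_eq_exp (r : Fin k → Bool) :
    wordProb p r = exp (log (p / (1 - p)) / 2 * signSum r - k * logScale p) := by
  have hq : 0 < 1 - p := sub_pos.mpr hp.2
  have hletter (b : Bool) : (if b then p else 1 - p) =
      exp (log (p / (1 - p)) / 2 * (if b then 1 else -1) - logScale p) := by
    rw [logScale_eq hp, log_div hp.1.ne' hq.ne']
    cases b
    · rw [← exp_log hq]
      simp only [Bool.false_eq_true, if_false, log_exp]
      ring_nf
    · rw [← exp_log hp.1]
      simp only [if_true, log_exp]
      ring_nf
  simp only [wordProb, hletter, ← exp_sum, signSum, Finset.mul_sum, Finset.sum_sub_distrib,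
    Finset.sum_const, Finset.card_univ, Fintype.card_fin, nsmul_eq_mul]

lemma expect_exp_mul_wordProb (F : ℝ → ℝ) (u : ℝ) :
    𝔼 r : Fin k → Bool, F (exp u * wordProb p r) =
      𝔼 r : Fin k → Bool, F (exp (u - k * logScale p + logSpread p * signSum r)) := by
  have hexp (r : Fin k → Bool) : exp u * wordProb p r =
      exp (u - k * logScale p + log (p / (1 - p)) / 2 * signSum r) := by
    rw [wordProb_eq_exp hp, ← exp_add]
    ring_nf
  simp only [hexp, logSpread]
  rcases abs_choice (log (p / (1 - p))) with h | h
  · rw [h]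
  · rw [h, ← expect_signSum_neg
      fun s ↦ F (exp (u - k * logScale p + -log (p / (1 - p)) / 2 * s))]
    simp only [neg_div, neg_mul_neg]

lemma exists_meanFill_location {α x : ℝ} (hα : 0 < α) (hα1 : α < 1) (hx : cdf γ x = α) :
    ∃ C, ∀ᶠ k : ℕ in atTop, ∀ u,
      (α ≤ meanFill p k (exp u) → -C ≤ levelOffset p x k u) ∧
      (meanFill p k (exp u) < α → levelOffset p x k u ≤ C) := by
  obtain ⟨C, hC⟩ := isSigmoid_fillProb_exp.exists_location tendsto_fillProb_exp_atBot
    tendsto_fillProb_exp_atTop (logSpread_nonneg p) hα hα1 hx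
  refine ⟨C, hC.mono fun k hk u ↦ ?_⟩
  obtain ⟨hlower, hupper⟩ := hk (u - k * logScale p)
  rw [meanFill, expect_exp_mul_wordProb hp, levelOffset]
  exact ⟨fun h ↦ by linarith [hlower h], fun h ↦ by linarith [hupper h]⟩

lemma exists_meanFill_gap (x R : ℝ) : ∃ c > 0, ∀ᶠ k : ℕ in atTop, ∀ u,
    |levelOffset p x k u| ≤ R →
      c * walkScale k ≤ meanFill p k (exp u) - meanFill p (k + 1) (exp u) := by
  have hcont : Continuous fun y ↦ fillDrop p (exp y) := by
    have := continuous_fillProb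
    unfold fillDrop
    fun_prop
  obtain ⟨c, hc, hgap⟩ := exists_pos_mul_walkScale_le_expect hcont
    (fun y ↦ fillDrop_pos hp (exp_pos y)) (logSpread_nonneg p) x R
  refine ⟨c, hc, hgap.mono fun k hk u hu ↦ ?_⟩
  rw [meanFill_sub_meanFill_succ, expect_exp_mul_wordProb hp]
  exact hk _ hu

end Logarithmic

section PoissonSplitting

variable {T : Type*} [DecidableEq T] {n : ℕ}

/-- The number of occurrences of the letter `t` in the word `w`. -/
def letterCount (w : Fin n → T) (t : T) : ℕ := Finset.card {i | w i = t}

lemma letterCount_cons (t : T) (w : Fin n → T) :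
    letterCount (Fin.cons t w : Fin (n + 1) → T) = letterCount w + Pi.single t 1 := by
  ext s
  simp only [letterCount, Finset.card_filter, Fin.sum_univ_succ, Fin.cons_zero, Fin.cons_succ,
    Pi.add_apply, Pi.single_apply, eq_comm (a := s), add_comm]

lemma sum_letterCount [Fintype T] (w : Fin n → T) : ∑ t, letterCount w t = n := by
  simpa [letterCount] using Finset.sum_card_fiberwise_eq_card_filter Finset.univ Finset.univ w

lemma prod_pow_letterCount [Fintype T] {M : Type*} [CommMonoid M] (W : T → M) (w : Fin n → T) :
    ∏ i, W (w i) = ∏ t, W t ^ letterCount w t := by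
  simp only [letterCount, ← Finset.prod_const, Finset.prod_fiberwise']

lemma prod_factorial_add_single [Fintype T] (m : T → ℕ) (t : T) :
    ∏ s, ((m + Pi.single t 1 : T → ℕ) s).factorial = (m t + 1) * ∏ s, (m s).factorial := by
  rw [Fintype.prod_eq_mul_prod_compl t, Fintype.prod_eq_mul_prod_compl t, ← mul_assoc]
  congr 1
  · simp [Nat.factorial_succ]
  · exact Finset.prod_congr rfl fun s hs ↦ by simp [show s ≠ t by simpa using hs]

lemma card_letterCount_eq_mul_prod_factorial [Fintype T] {m : T → ℕ} (hm : ∑ t, m t = n) :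
    Finset.card {w : Fin n → T | letterCount w = m} * ∏ t, (m t).factorial = n.factorial := by
  induction n generalizing m with
  | zero =>
    obtain rfl : m = 0 := funext fun t ↦ by simpa using Finset.sum_eq_zero_iff.mp hm t
    simp [letterCount, funext_iff]
  | succ n ih =>
    have hcons : Finset.card {w : Fin (n + 1) → T | letterCount w = m} =
        ∑ t, Finset.card {w : Fin n → T | letterCount w + Pi.single t 1 = m} := by
      simp only [Finset.card_filter, ← letterCount_cons]
      rw [← (Fin.consEquiv fun _ ↦ T).sum_comp, Fintype.sum_prod_type]
      rfl
    have hfirst (t : T) : Finset.card {w : Fin n → T | letterCount w + Pi.single t 1 = m} *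
        ∏ s, (m s).factorial = m t * n.factorial := by
      rcases Nat.eq_zero_or_pos (m t) with ht | ht
      · have hne (w : Fin n → T) : letterCount w + Pi.single t 1 ≠ m := fun h ↦ by
          simpa [ht] using congrFun h t
        simp [hne, ht]
      · have hle : Pi.single t 1 ≤ m := update_le_iff.mpr ⟨ht, fun _ _ ↦ Nat.zero_le _⟩
        obtain ⟨m, rfl⟩ : ∃ m' : T → ℕ, m = m' + Pi.single t 1 :=
          ⟨_, (tsub_add_cancel_of_le hle).symm⟩
        have hsum : ∑ s, m s = n := by
          simpa [Finset.sum_add_distrib] using hm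
        simp only [add_left_inj]
        rw [prod_factorial_add_single, mul_left_comm, ih hsum]
        simp
    rw [hcons, Finset.sum_mul, Finset.sum_congr rfl fun t _ ↦ hfirst t, ← Finset.sum_mul, hm,
      Nat.factorial_succ]

lemma prod_poissonMeasure_singleton [Fintype T] {W : T → NNReal} (hW : ∑ t, W t = 1)
    (lam : NNReal) (m : T → ℕ) :
    ∏ t, poissonMeasure (lam * W t) {m t} =
      Finset.card {w : Fin (∑ t, m t) → T | letterCount w = m} * (∏ t, (W t : ENNReal) ^ m t) *
        poissonMeasure lam {∑ t, m t} := by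
  have hprod : ∏ t, (W t : ENNReal) ^ m t ≠ ⊤ := ENNReal.prod_ne_top fun t _ ↦ by finiteness
  rw [← ENNReal.toReal_eq_toReal_iff' (ENNReal.prod_ne_top fun t _ ↦ by finiteness)
    (by finiteness)]
  have hexp : ∏ t, exp (-(lam * W t : ℝ)) = exp (-lam) := by
    rw [← exp_sum, Finset.sum_neg_distrib, ← Finset.mul_sum, ← NNReal.coe_sum, hW,
      NNReal.coe_one, mul_one]
  have hcard := card_letterCount_eq_mul_prod_factorial (rfl : ∑ t, m t = ∑ t, m t)
  have hcard0 := left_ne_zero_of_mul (hcard.trans_ne (Nat.factorial_ne_zero _))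
  simp only [ENNReal.toReal_prod, ENNReal.toReal_mul, ENNReal.toReal_natCast, ENNReal.toReal_pow,
    ENNReal.coe_toReal, ← measureReal_def, poissonMeasure_real_singleton, NNReal.coe_mul, mul_pow,
    Finset.prod_div_distrib, Finset.prod_mul_distrib, hexp, Finset.prod_pow_eq_pow_sum, ← hcard,
    Nat.cast_mul, Nat.cast_prod]
  field_simp

variable {Ω : Type*} [MeasurableSpace Ω] {ν : Measure Ω} {Y : ℕ → Ω → T} {W : T → NNReal}

/-- The number of occurrences of `t` among the first `ω.1` letters of the sequence `Y · ω.2`. -/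
def randomLetterCount (Y : ℕ → Ω → T) (t : T) (ω : ℕ × Ω) : ℕ :=
  letterCount (fun i : Fin ω.1 ↦ Y i ω.2) t

variable [MeasurableSpace T] [MeasurableSingletonClass T] (hY : ∀ i, Measurable (Y i))
include hY

lemma measurable_letterCount [Finite T] (n : ℕ) :
    Measurable fun ω ↦ letterCount fun i : Fin n ↦ Y i ω :=
  (measurable_of_finite letterCount).comp (measurable_pi_lambda _ fun i ↦ hY i)

lemma measurable_randomLetterCount [Finite T] (t : T) : Measurable (randomLetterCount Y t) :=
  measurable_from_prod_countable_right fun n ↦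
    (measurable_pi_apply t).comp (measurable_letterCount hY n)

variable [Fintype T]
  (hW : ∀ n (w : Fin n → T), ν {ω | ∀ i : Fin n, Y i ω = w i} = ∏ i, (W (w i) : ENNReal))
include hW

lemma measure_letterCount_eq (n : ℕ) (m : T → ℕ) :
    ν {ω | letterCount (fun i : Fin n ↦ Y i ω) = m} =
      Finset.card {w : Fin n → T | letterCount w = m} * ∏ t, (W t : ENNReal) ^ m t := by
  have hmeas : Measurable fun ω (i : Fin n) ↦ Y i ω := measurable_pi_lambda _ fun i ↦ hY i
  calc ν {ω | letterCount (fun i : Fin n ↦ Y i ω) = m}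
      = ∑ w : Fin n → T with letterCount w = m, ν ((fun ω (i : Fin n) ↦ Y i ω) ⁻¹' {w}) := by
        rw [sum_measure_preimage_singleton _ fun w _ ↦ hmeas (measurableSet_singleton w)]
        simp [Set.preimage]
    _ = ∑ w : Fin n → T with letterCount w = m, ∏ t, (W t : ENNReal) ^ m t :=
        Finset.sum_congr rfl fun w hw ↦ by
          rw [← (Finset.mem_filter.mp hw).2, ← prod_pow_letterCount (fun t ↦ (W t : ENNReal)),
            ← hW]
          simp [Set.preimage, funext_iff]
    _ = _ := by rw [Finset.sum_const, nsmul_eq_mul]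

variable (hW1 : ∑ t, W t = 1)
include hW1

lemma map_randomLetterCount [SFinite ν] (lam : NNReal) :
    ((poissonMeasure lam).prod ν).map (fun ω t ↦ randomLetterCount Y t ω) =
      Measure.pi fun t ↦ poissonMeasure (lam * W t) := by
  have hmeas : Measurable fun ω t ↦ randomLetterCount Y t ω :=
    measurable_pi_lambda _ (measurable_randomLetterCount hY)
  refine Measure.ext_of_singleton fun m ↦ ?_
  have hsection (n : ℕ) (hn : n ≠ ∑ t, m t) :
      {ω | letterCount (fun i : Fin n ↦ Y i ω) = m} = ∅ := by
    refine Set.eq_empty_of_forall_notMem fun ω hω ↦ hn ?_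
    rw [← Set.mem_ofPred.mp hω, sum_letterCount]
  calc _ = ∑' n, ν {ω | letterCount (fun i : Fin n ↦ Y i ω) = m} * poissonMeasure lam {n} := by
        rw [Measure.map_apply hmeas (measurableSet_singleton m),
          Measure.prod_apply (hmeas (measurableSet_singleton m)), lintegral_countable']
        simp only [Set.preimage, Set.mem_singleton_iff]
        rfl
    _ = Finset.card {w : Fin (∑ t, m t) → T | letterCount w = m} *
          (∏ t, (W t : ENNReal) ^ m t) * poissonMeasure lam {∑ t, m t} := by
        rw [tsum_eq_single (∑ t, m t) fun n hn ↦ by rw [hsection n hn, measure_empty, zero_mul],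
          measure_letterCount_eq hY hW]
    _ = _ := by
        rw [Measure.pi_singleton, prod_poissonMeasure_singleton hW1]

variable [IsProbabilityMeasure ν] (lam : NNReal)

lemma map_randomLetterCount_apply (t : T) :
    ((poissonMeasure lam).prod ν).map (randomLetterCount Y t) = poissonMeasure (lam * W t) := by
  have hmeas : Measurable fun ω t ↦ randomLetterCount Y t ω :=
    measurable_pi_lambda _ (measurable_randomLetterCount hY)
  rw [← (measurePreserving_eval (fun t ↦ poissonMeasure (lam * W t)) t).map_eq,
    ← map_randomLetterCount hY hW hW1, Measure.map_map (measurable_pi_apply t) hmeas]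
  rfl

lemma iIndepFun_randomLetterCount :
    iIndepFun (randomLetterCount Y) ((poissonMeasure lam).prod ν) := by
  rw [iIndepFun_iff_map_fun_eq_pi_map fun t ↦ (measurable_randomLetterCount hY t).aemeasurable,
    map_randomLetterCount hY hW hW1]
  simp only [map_randomLetterCount_apply hY hW hW1]

end PoissonSplitting

lemma poissonMeasure_real_Ici_two (x : NNReal) :
    (poissonMeasure x).real (Set.Ici 2) = fillProb x := by
  have hcompl : (Set.Ici 2 : Set ℕ) = ({0, 1} : Set ℕ)ᶜ := by
    ext n
    simp only [Set.mem_Ici, Set.mem_compl_iff, Set.mem_insert_iff, Set.mem_singleton_iff]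
    lia
  rw [hcompl, probReal_compl_eq_one_sub (Set.toFinite _).measurableSet, Set.insert_eq,
    measureReal_union (by simp) (measurableSet_singleton 1), poissonMeasure_real_singleton,
    poissonMeasure_real_singleton, fillProb, pow_zero, pow_one, Nat.factorial_zero,
    Nat.factorial_one, Nat.cast_one]
  ring

section FilledFraction

variable {p : ℝ} {ν : Measure (ℕ → ℕ → Bool)} {k : ℕ}

/-- The first `k` bits of the `i`-th string. -/
def bitPrefix (k i : ℕ) (ω : ℕ → ℕ → Bool) : Fin k → Bool := fun j ↦ ω i j

/-- The indicator, as a real random variable, that at least two inserted strings start with `r`. -/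
noncomputable def filled (r : Fin k → Bool) (ω : ℕ × (ℕ → ℕ → Bool)) : ℝ :=
  (Set.Ici 2).indicator 1 (randomLetterCount (bitPrefix k) r ω)

lemma measurable_bitPrefix (i : ℕ) : Measurable (bitPrefix k i) :=
  measurable_pi_lambda _ fun j ↦ (measurable_pi_apply (j : ℕ)).comp (measurable_pi_apply i)

lemma measurable_filled (r : Fin k → Bool) : Measurable (filled r) :=
  (measurable_of_countable _).comp (measurable_randomLetterCount measurable_bitPrefix r)

lemma filled_mem_Icc (r : Fin k → Bool) (ω : ℕ × (ℕ → ℕ → Bool)) : filled r ω ∈ Set.Icc 0 1 :=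
  ⟨Set.indicator_nonneg (fun _ _ ↦ zero_le_one) _,
    Set.indicator_le_self' (fun _ _ ↦ zero_le_one) _⟩

lemma prefCount_eq_randomLetterCount (ω : ℕ × (ℕ → ℕ → Bool)) (r : Fin k → Bool) :
    prefCount ω.2 ω.1 k r = randomLetterCount (bitPrefix k) r ω := by
  simp only [prefCount, randomLetterCount, letterCount, bitPrefix, funext_iff, Finset.card_filter]
  exact (Fin.sum_univ_eq_sum_range (fun i ↦ if ∀ j : Fin k, ω.2 i j = r j then 1 else 0) _).symm

lemma fracFilledPo_eq_smul_sum :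
    fracFilledPo k = ((2 : ℝ) ^ k)⁻¹ • ∑ r : Fin k → Bool, filled r := by
  ext ω
  simp [fracFilledPo, fillCountPo, fillCount, filled, Set.indicator_apply,
    prefCount_eq_randomLetterCount, div_eq_inv_mul]

instance isProbabilityMeasure_poModel [IsProbabilityMeasure ν] (lam : NNReal) :
    IsProbabilityMeasure (poModel lam ν) := by
  unfold poModel
  infer_instance

lemma memLp_filled [IsProbabilityMeasure ν] (lam : NNReal) (r : Fin k → Bool) :
    MemLp (filled r) 2 (poModel lam ν) :=
  memLp_of_bounded (ae_of_all _ (filled_mem_Icc r)) (measurable_filled r).aestronglyMeasurable 2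

lemma memLp_fracFilledPo [IsProbabilityMeasure ν] (lam : NNReal) (k : ℕ) :
    MemLp (fracFilledPo k) 2 (poModel lam ν) := by
  rw [fracFilledPo_eq_smul_sum]
  exact (memLp_finsetSum' _ fun r _ ↦ memLp_filled lam r).const_smul _

variable (hp : p ∈ Set.Ioo (0 : ℝ) 1)
include hp

lemma sum_toNNReal_wordProb : ∑ r : Fin k → Bool, (wordProb p r).toNNReal = 1 := by
  rw [← Real.toNNReal_sum_of_nonneg fun r _ ↦ (wordProb_pos hp r).le, sum_wordProb,
    Real.toNNReal_one]

variable (hν : IIDBits p ν)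
include hν

lemma measure_bitPrefix_eq (n : ℕ) (w : Fin n → Fin k → Bool) :
    ν {ω | ∀ i : Fin n, bitPrefix k i ω = w i} =
      ∏ i, ((wordProb p (w i)).toNNReal : ENNReal) := by
  let b : ℕ × ℕ → Bool := fun s ↦
    if h : s.1 < n ∧ s.2 < k then w ⟨s.1, h.1⟩ ⟨s.2, h.2⟩ else false
  have hb (i : Fin n) (j : Fin k) : b (i, j) = w i j := by simp [b]
  have hset : {ω | ∀ i : Fin n, bitPrefix k i ω = w i} =
      {ω | ∀ s ∈ Finset.range n ×ˢ Finset.range k, ω s.1 s.2 = b s} := by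
    ext ω
    simp only [Set.mem_ofPred_eq, funext_iff, bitPrefix, Finset.mem_product, Finset.mem_range,
      Prod.forall, ← hb]
    exact ⟨fun h i j hij ↦ h ⟨i, hij.1⟩ ⟨j, hij.2⟩, fun h i j ↦ h i j ⟨i.2, j.2⟩⟩
  rw [hset, hν.2, Finset.prod_product, ← Fin.prod_univ_eq_prod_range
    fun i ↦ ∏ j ∈ Finset.range k, ENNReal.ofReal (if b (i, j) then p else 1 - p)]
  refine Finset.prod_congr rfl fun i _ ↦ ?_
  have hnonneg (j : Fin k) : 0 ≤ if w i j then p else 1 - p := by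
    split_ifs
    exacts [hp.1.le, sub_nonneg.mpr hp.2.le]
  rw [← Fin.prod_univ_eq_prod_range fun j ↦ ENNReal.ofReal (if b (i, j) then p else 1 - p)]
  simp only [hb]
  rw [← ENNReal.ofReal_prod_of_nonneg fun j _ ↦ hnonneg j]
  rfl

variable (lam : NNReal)

lemma iIndepFun_filled : iIndepFun (fun r : Fin k → Bool ↦ filled r) (poModel lam ν) :=
  haveI := hν.1
  (iIndepFun_randomLetterCount measurable_bitPrefix (measure_bitPrefix_eq hp hν)
    (sum_toNNReal_wordProb hp) lam).comp _ fun _ ↦ measurable_of_countable _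

lemma integral_filled (r : Fin k → Bool) :
    ∫ ω, filled r ω ∂poModel lam ν = fillProb (lam * wordProb p r) := by
  have := hν.1
  have hmap := map_randomLetterCount_apply measurable_bitPrefix (measure_bitPrefix_eq hp hν)
    (sum_toNNReal_wordProb hp) lam r
  calc ∫ ω, filled r ω ∂poModel lam ν
      = ∫ n, (Set.Ici 2).indicator 1 n ∂poissonMeasure (lam * (wordProb p r).toNNReal) := by
        rw [← hmap, integral_map (measurable_randomLetterCount measurable_bitPrefix r).aemeasurable
          (measurable_of_countable _).aestronglyMeasurable]
        rfl
    _ = fillProb (lam * wordProb p r) := by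
        rw [integral_indicator_one (Set.to_countable _).measurableSet, poissonMeasure_real_Ici_two,
          NNReal.coe_mul, Real.coe_toNNReal _ (wordProb_pos hp r).le]

lemma integral_fracFilledPo (k : ℕ) :
    ∫ ω, fracFilledPo k ω ∂poModel lam ν = meanFill p k lam := by
  have := hν.1
  simp only [fracFilledPo_eq_smul_sum, Pi.smul_apply, Finset.sum_apply, smul_eq_mul]
  rw [integral_const_mul,
    integral_finsetSum _ fun r _ ↦ (memLp_filled lam r).integrable one_le_two]
  simp [integral_filled hp hν, meanFill, Fintype.expect_eq_sum_div_card, div_eq_inv_mul]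

lemma variance_fracFilledPo_le (k : ℕ) : Var[fracFilledPo k; poModel lam ν] ≤ 1 / 2 ^ k := by
  have := hν.1
  have hone (r : Fin k → Bool) : Var[filled r; poModel lam ν] ≤ 1 :=
    (variance_le_sq_of_bounded (ae_of_all _ (filled_mem_Icc r))
      (measurable_filled r).aemeasurable).trans (by norm_num)
  rw [fracFilledPo_eq_smul_sum, variance_smul, IndepFun.variance_sum
    (fun r _ ↦ memLp_filled lam r) fun r _ s _ hrs ↦ (iIndepFun_filled hp hν lam).indepFun hrs]
  calc ((2 : ℝ) ^ k)⁻¹ ^ 2 * ∑ r : Fin k → Bool, Var[filled r; poModel lam ν]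
      ≤ ((2 : ℝ) ^ k)⁻¹ ^ 2 * ∑ _r : Fin k → Bool, 1 := by gcongr with r; exact hone r
    _ = 1 / 2 ^ k := by
        simp only [Finset.sum_const, Finset.card_univ, Fintype.card_pi, Fintype.card_bool,
          Finset.prod_const, Fintype.card_fin, nsmul_eq_mul, Nat.cast_pow, Nat.cast_ofNat]
        field_simp

lemma poModel_real_abs_fracFilledPo_sub_ge_le (k : ℕ) {ε : ℝ} (hε : 0 < ε) :
    (poModel lam ν).real {ω | ε ≤ |fracFilledPo k ω - meanFill p k lam|} ≤ 1 / 2 ^ k / ε ^ 2 := by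
  have := hν.1
  have hcheb := meas_ge_le_variance_div_sq (memLp_fracFilledPo (ν := ν) lam k) hε
  rw [integral_fracFilledPo hp hν] at hcheb
  exact (ENNReal.toReal_le_of_le_ofReal
    (div_nonneg (variance_nonneg _ _) (sq_nonneg ε)) hcheb).trans
    (div_le_div_of_nonneg_right (variance_fracFilledPo_le hp hν lam k) (sq_nonneg ε))

end FilledFraction

section FillupLevel

variable {α : ℝ}

lemma fillCount_succ_le (ω : ℕ → ℕ → Bool) (n k : ℕ) :
    fillCount ω n (k + 1) ≤ 2 * fillCount ω n k := by
  have hprefix (r : Fin (k + 1) → Bool) : prefCount ω n (k + 1) r ≤ prefCount ω n k (Fin.init r) :=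
    Finset.card_le_card <| Finset.monotone_filter_right _ fun i _ h j ↦ h j.castSucc
  have hinj : Function.Injective fun r : Fin (k + 1) → Bool ↦ (r (Fin.last k), Fin.init r) :=
    fun r s h ↦ by
      obtain ⟨hlast, hinit⟩ := Prod.ext_iff.mp h
      rw [← Fin.snoc_init_self r, ← Fin.snoc_init_self s]
      exact congrArg₂ (Fin.snoc (α := fun _ ↦ Bool)) hinit hlast
  have hmaps : ∀ r ∈ ({r | 2 ≤ prefCount ω n (k + 1) r} : Finset (Fin (k + 1) → Bool)),
      (r (Fin.last k), Fin.init r) ∈ (Finset.univ : Finset Bool) ×ˢ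
        ({r | 2 ≤ prefCount ω n k r} : Finset (Fin k → Bool)) := fun r hr ↦ by
    simp only [Finset.mem_filter, Finset.mem_product, Finset.mem_univ, true_and] at hr ⊢
    exact hr.trans (hprefix r)
  simpa [fillCount] using Finset.card_le_card_of_injOn _ hmaps hinj.injOn

lemma antitone_fracFilledPo (ω : ℕ × (ℕ → ℕ → Bool)) : Antitone fun k ↦ fracFilledPo k ω := by
  refine antitone_nat_of_succ_le fun k ↦ ?_
  have h : (fillCount ω.2 ω.1 (k + 1) : ℝ) ≤ 2 * fillCount ω.2 ω.1 k := by
    exact_mod_cast fillCount_succ_le ω.2 ω.1 k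
  rw [fracFilledPo, fracFilledPo, fillCountPo, fillCountPo, pow_succ', ← div_div]
  gcongr
  linarith

lemma fillupLevelPo_eq_or {k : ℕ} {ω : ℕ × (ℕ → ℕ → Bool)} (hk : α ≤ fracFilledPo k ω)
    (hk2 : fracFilledPo (k + 2) ω < α) :
    fillupLevelPo α ω = k ∨ fillupLevelPo α ω = k + 1 := by
  have hub : k + 1 ∈ upperBounds {k | α ≤ fracFilledPo k ω} := fun j hj ↦ by
    by_contra! hlt
    exact (hk2.trans_le hj).not_ge (antitone_fracFilledPo ω hlt)
  have hlower : k ≤ fillupLevelPo α ω := le_csSup ⟨k + 1, hub⟩ hk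
  have hupper : fillupLevelPo α ω ≤ k + 1 := csSup_le ⟨k, hk⟩ hub
  lia

variable {p : ℝ} {ν : Measure (ℕ → ℕ → Bool)}

lemma one_sub_le_poModel_real_fillupLevelPo (hp : p ∈ Set.Ioo (0 : ℝ) 1) (hν : IIDBits p ν)
    (lam : NNReal) {k : ℕ} {ε : ℝ} (hε : 0 < ε) (hk : α + ε ≤ meanFill p k lam)
    (hk2 : meanFill p (k + 2) lam ≤ α - ε) :
    1 - 2 * (1 / 2 ^ k / ε ^ 2) ≤
      (poModel lam ν).real {ω | fillupLevelPo α ω = k ∨ fillupLevelPo α ω = k + 1} := by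
  have := hν.1
  let bad (j : ℕ) : Set (ℕ × (ℕ → ℕ → Bool)) := {ω | ε ≤ |fracFilledPo j ω - meanFill p j lam|}
  let good := {ω | fillupLevelPo α ω = k ∨ fillupLevelPo α ω = k + 1}
  have hcover : Set.univ ⊆ good ∪ (bad k ∪ bad (k + 2)) := fun ω _ ↦ by
    by_contra! h
    simp only [bad, Set.mem_union, Set.mem_ofPred_eq, not_or, not_le] at h
    obtain ⟨hgood, hbad, hbad2⟩ := h
    refine hgood (fillupLevelPo_eq_or ?_ ?_)
    · linarith [(abs_lt.mp hbad).1]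
    · linarith [(abs_lt.mp hbad2).2]
  have hmeas := (measureReal_mono (μ := poModel lam ν) hcover).trans
    ((measureReal_union_le _ _).trans (add_le_add_right (measureReal_union_le _ _) _))
  rw [probReal_univ] at hmeas
  have hbad := poModel_real_abs_fracFilledPo_sub_ge_le hp hν lam k hε
  have hbad2 : (poModel lam ν).real (bad (k + 2)) ≤ 1 / 2 ^ k / ε ^ 2 :=
    (poModel_real_abs_fracFilledPo_sub_ge_le hp hν lam (k + 2) hε).trans (by gcongr <;> simp)
  linarith

end FillupLevel

section MeanLevel

variable {p α x : ℝ} {k : ℕ}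

/-- The deterministic analogue `max {k : E X̄_k(x) ≥ α}` of the `α`-fillup level. -/
noncomputable def meanLevel (p α x : ℝ) : ℕ := sSup {k | α ≤ meanFill p k x}

lemma abs_inv_walkScale_succ_sub_le (k : ℕ) :
    |1 / walkScale (k + 1) - 1 / walkScale k| ≤ 1 := by
  have hmono : √((k : ℝ) + 1) ≤ √((k : ℝ) + 1 + 1) := by gcongr; simp
  have hadd : √((k : ℝ) + 1 + 1) ≤ √((k : ℝ) + 1) + 1 := by
    rw [sqrt_le_left (by positivity), add_sq, sq_sqrt (by positivity)]
    linarith [sqrt_nonneg ((k : ℝ) + 1)]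
  simp only [walkScale, one_div, inv_inv, Nat.cast_add, Nat.cast_one]
  rw [abs_of_nonneg (sub_nonneg.mpr hmono)]
  linarith

lemma antitone_walkScale : Antitone walkScale := fun m n h ↦ by
  unfold walkScale
  gcongr

lemma exists_two_step_drop {f : ℕ → ℝ} {ε : ℝ} {m : ℕ} (hε : 0 ≤ ε)
    (hm1 : α ≤ f (m + 1)) (hm2 : f (m + 2) < α) (h0 : 2 * ε ≤ f m - f (m + 1))
    (h1 : 2 * ε ≤ f (m + 1) - f (m + 2)) (h2 : 2 * ε ≤ f (m + 2) - f (m + 3)) :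
    ∃ k, m ≤ k ∧ k ≤ m + 1 ∧ α + ε ≤ f k ∧ f (k + 2) ≤ α - ε := by
  rcases le_or_gt (α + ε) (f (m + 1)) with hlarge | hsmall
  · have hnext : f (m + 3) ≤ α - ε := by linarith
    exact ⟨m + 1, by simp, le_rfl, hlarge, hnext⟩
  · exact ⟨m, le_rfl, by simp, by linarith, by linarith⟩

variable (hp : p ∈ Set.Ioo (0 : ℝ) 1)
include hp

lemma abs_levelOffset_succ_sub_le (x : ℝ) (k : ℕ) (u : ℝ) :
    |levelOffset p x (k + 1) u - levelOffset p x k u| ≤ logScale p + logSpread p * |x| := by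
  have hsub : levelOffset p x (k + 1) u - levelOffset p x k u =
      -logScale p - logSpread p * x * (1 / walkScale (k + 1) - 1 / walkScale k) := by
    simp only [levelOffset, Nat.cast_add, Nat.cast_one]
    ring
  rw [hsub]
  refine (abs_sub _ _).trans ?_
  rw [abs_neg, abs_of_pos (logScale_pos hp), abs_mul, abs_mul, abs_of_nonneg (logSpread_nonneg p)]
  have hspread : 0 ≤ logSpread p * |x| := mul_nonneg (logSpread_nonneg p) (abs_nonneg x)
  linarith [mul_le_of_le_one_right hspread (abs_inv_walkScale_succ_sub_le k)]

lemma bddAbove_le_meanFill (hα : 0 < α) (hx : 0 ≤ x) : BddAbove {k | α ≤ meanFill p k x} := by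
  have hlim : Tendsto (fun k : ℕ ↦ x / 2 ^ k) atTop (nhds 0) :=
    tendsto_const_nhds.div_atTop (tendsto_pow_atTop_atTop_of_one_lt one_lt_two)
  obtain ⟨n, hn⟩ := eventually_atTop.mp (hlim.eventually_lt_const hα)
  refine ⟨n, fun k hk ↦ ?_⟩
  by_contra! hnk
  exact (hn k hnk.le).not_ge (le_trans hk (meanFill_le_div_two_pow hp hx))

lemma le_meanLevel (hα : 0 < α) (hx : 0 ≤ x) (hk : α ≤ meanFill p k x) : k ≤ meanLevel p α x :=
  le_csSup (bddAbove_le_meanFill hp hα hx) hk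

lemma le_meanFill_meanLevel (hα : 0 < α) (hx : 0 ≤ x) (hk : α ≤ meanFill p k x) :
    α ≤ meanFill p (meanLevel p α x) x :=
  Nat.sSup_mem ⟨k, hk⟩ (bddAbove_le_meanFill hp hα hx)

lemma meanFill_meanLevel_succ_lt (hα : 0 < α) (hx : 0 ≤ x) :
    meanFill p (meanLevel p α x + 1) x < α :=
  not_le.mp fun h ↦ (Nat.lt_succ_self _).not_ge (le_meanLevel hp hα hx h)

lemma eventually_le_meanFill (hα1 : α < 1) (k : ℕ) : ∀ᶠ y in atTop, α ≤ meanFill p k y :=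
  ((tendsto_meanFill_atTop hp k).eventually_const_lt hα1).mono fun _ ↦ le_of_lt

variable (hα : 0 < α) (hα1 : α < 1)
include hα hα1

lemma tendsto_meanLevel : Tendsto (meanLevel p α) atTop atTop := by
  refine tendsto_atTop.mpr fun k ↦ ?_
  filter_upwards [eventually_le_meanFill hp hα1 k, eventually_ge_atTop 0] with y hy hy0
  exact le_meanLevel hp hα hy0 hy

variable (hx : cdf γ x = α)
include hx

lemma exists_abs_levelOffset_meanLevel_le :
    ∃ C, ∀ᶠ y in atTop, |levelOffset p x (meanLevel p α y) (log y)| ≤ C := by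
  obtain ⟨C, hC⟩ := exists_meanFill_location hp hα hα1 hx
  refine ⟨C + (logScale p + logSpread p * |x|), ?_⟩
  have hK := tendsto_meanLevel hp hα hα1
  filter_upwards [hK.eventually hC, ((tendsto_add_atTop_nat 1).comp hK).eventually hC,
    eventually_le_meanFill hp hα1 0, eventually_gt_atTop 0] with y hlower hupper hy0 hy
  have hle := (hlower (log y)).1 (by rw [exp_log hy]; exact le_meanFill_meanLevel hp hα hy.le hy0)
  have hlt := (hupper (log y)).2 (by rw [exp_log hy]; exact meanFill_meanLevel_succ_lt hp hα hy.le)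
  have hstep := abs_le.mp (abs_levelOffset_succ_sub_le hp x (meanLevel p α y) (log y))
  simp only [Function.comp_apply] at hlt
  exact abs_le.mpr ⟨by linarith, by linarith⟩

lemma exists_meanFill_two_step_drop : ∃ c > 0, ∀ᶠ y in atTop, ∃ k, k ≤ meanLevel p α y ∧
    meanLevel p α y ≤ k + 1 ∧ α + c * walkScale (k + 2) ≤ meanFill p k y ∧
    meanFill p (k + 2) y ≤ α - c * walkScale (k + 2) := by
  obtain ⟨C, hC⟩ := exists_abs_levelOffset_meanLevel_le hp hα hα1 hx
  obtain ⟨c, hc, hgap⟩ := exists_meanFill_gap hp x (C + (logScale p + logSpread p * |x|))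
  refine ⟨c / 2, by positivity, ?_⟩
  have hK := tendsto_meanLevel hp hα hα1
  obtain ⟨n, hn⟩ := eventually_atTop.mp hgap
  filter_upwards [hC, hK.eventually_ge_atTop (n + 1), eventually_le_meanFill hp hα1 0,
    eventually_gt_atTop 0] with y hoffset hny hy0 hy
  have hle := le_meanFill_meanLevel hp hα hy.le hy0
  have hlt := meanFill_meanLevel_succ_lt hp hα hy.le
  obtain ⟨m, hm⟩ : ∃ m, meanLevel p α y = m + 1 := ⟨meanLevel p α y - 1, by lia⟩
  rw [hm] at hoffset hle hlt hny ⊢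
  have hdrop {j : ℕ} (hnj : n ≤ j) (hj : j ≤ m + 2)
      (hoff : |levelOffset p x j (log y)| ≤ C + (logScale p + logSpread p * |x|)) :
      2 * (c / 2 * walkScale (m + 2)) ≤ meanFill p j y - meanFill p (j + 1) y := by
    have h := hn j hnj (log y) hoff
    rw [exp_log hy] at h
    refine le_trans ?_ h
    rw [← mul_assoc, mul_div_cancel₀ c two_ne_zero]
    exact mul_le_mul_of_nonneg_left (antitone_walkScale hj) hc.le
  have habove : |levelOffset p x (m + 2) (log y) - levelOffset p x (m + 1) (log y)| ≤
      logScale p + logSpread p * |x| := abs_levelOffset_succ_sub_le hp x (m + 1) (log y)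
  have hbelow := abs_le.mp (abs_levelOffset_succ_sub_le hp x m (log y))
  rw [abs_le] at habove hoffset
  obtain ⟨k, hmk, hkm, hk, hk2⟩ := exists_two_step_drop (f := fun j ↦ meanFill p j y)
    (mul_nonneg (half_pos hc).le (walkScale_pos (m + 2)).le) hle hlt
    (hdrop (j := m) (by lia) (by lia) (abs_le.mpr ⟨by linarith, by linarith⟩))
    (hdrop (j := m + 1) (by lia) (by lia) (abs_le.mpr ⟨by linarith, by linarith⟩))
    (hdrop (j := m + 2) (by lia) le_rfl (abs_le.mpr ⟨by linarith, by linarith⟩))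
  have hmono : c / 2 * walkScale (k + 2) ≤ c / 2 * walkScale (m + 2) :=
    mul_le_mul_of_nonneg_left (antitone_walkScale (by lia)) (by positivity)
  exact ⟨k, hkm, by lia, by linarith, by linarith⟩

end MeanLevel

section FillupCenter

variable {p α x y : ℝ}

/-- The deterministic approximation of the `Φ(x)`-fillup level at intensity `y`. -/
noncomputable def fillupCenter (p x y : ℝ) : ℝ :=
  logb (1 / √(p * (1 - p))) y -
    |log (p / (1 - p))| / (2 * log (1 / √(p * (1 - p))) ^ ((3 : ℝ) / 2)) * x * √(log y)

lemma abs_sq_sub_le_of_abs_le {s t b B : ℝ} (hs : 0 ≤ s) (ht : 1 ≤ t)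
    (h : |s ^ 2 - t ^ 2 - b * t| ≤ B) : |t ^ 2 - (s ^ 2 - b * s)| ≤ B + |b| * (|b| + B) := by
  have hst : |s - t| ≤ |b| + B := by
    refine le_of_mul_le_mul_right ?_ (by linarith : 0 < t)
    calc |s - t| * t ≤ |s - t| * (s + t) := by gcongr; linarith
      _ = |s - t| * |s + t| := by rw [abs_of_nonneg (by linarith : 0 ≤ s + t)]
      _ = |b * t + (s ^ 2 - t ^ 2 - b * t)| := by rw [← abs_mul]; ring_nf
      _ ≤ |b| * t + B * 1 := by
          refine (abs_add_le _ _).trans ?_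
          rw [abs_mul, abs_of_nonneg (zero_le_one.trans ht), mul_one]
          gcongr
      _ ≤ (|b| + B) * t := by
          have := (abs_nonneg _).trans h
          rw [add_mul]
          gcongr
  calc |t ^ 2 - (s ^ 2 - b * s)| = |-(s ^ 2 - t ^ 2 - b * t) + b * (s - t)| := by ring_nf
    _ ≤ B + |b| * (|b| + B) := by
        refine (abs_add_le _ _).trans ?_
        rw [abs_neg, abs_mul]
        gcongr

variable (hp : p ∈ Set.Ioo (0 : ℝ) 1)
include hp

lemma fillupCenter_eq_sq_sub (x : ℝ) (hy : 1 ≤ y) : fillupCenter p x y =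
    √(log y / logScale p) ^ 2 - logSpread p * x / logScale p * √(log y / logScale p) := by
  have hβ := logScale_pos hp
  have hpow : logScale p ^ ((3 : ℝ) / 2) = logScale p * √(logScale p) := by
    rw [show (3 : ℝ) / 2 = 1 + 1 / 2 by norm_num, rpow_add hβ, rpow_one, sqrt_eq_rpow]
  have := sqrt_pos.mpr hβ
  rw [sq_sqrt (div_nonneg (log_nonneg hy) hβ.le), sqrt_div' _ hβ.le, fillupCenter, logb,
    ← logScale, hpow, logSpread]
  field_simp

lemma tendsto_fillupCenter (x : ℝ) : Tendsto (fillupCenter p x) atTop atTop := by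
  have hs : Tendsto (fun y ↦ √(log y / logScale p)) atTop atTop :=
    tendsto_sqrt_atTop.comp (tendsto_log_atTop.atTop_div_const (logScale_pos hp))
  refine (hs.atTop_mul_atTop₀
    (tendsto_atTop_add_const_right _ (-(logSpread p * x / logScale p)) hs)).congr' ?_
  filter_upwards [eventually_ge_atTop 1] with y hy
  rw [fillupCenter_eq_sq_sub hp x hy]
  ring

lemma exists_abs_natCast_sub_fillupCenter_le (x : ℝ) :
    ∃ C, ∀ y ≥ 1, ∃ k : ℕ, |k - fillupCenter p x y| ≤ C := by
  set b := logSpread p * x / logScale p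
  refine ⟨1 + b ^ 2, fun y hy ↦ ⟨⌊fillupCenter p x y⌋₊, abs_le.mpr ⟨?_, ?_⟩⟩⟩
  · linarith [Nat.lt_floor_add_one (fillupCenter p x y), sq_nonneg b]
  · rcases le_total 0 (fillupCenter p x y) with hpos | hneg
    · linarith [Nat.floor_le hpos, sq_nonneg b]
    · rw [Nat.floor_of_nonpos hneg, fillupCenter_eq_sq_sub hp x hy, Nat.cast_zero]
      nlinarith [sq_nonneg (√(log y / logScale p) - b), sq_nonneg (√(log y / logScale p))]

variable (hα : 0 < α) (hα1 : α < 1) (hx : cdf γ x = α)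
include hα hα1 hx

lemma exists_abs_meanLevel_sub_fillupCenter_le :
    ∃ C, ∀ᶠ y in atTop, |meanLevel p α y - fillupCenter p x y| ≤ C := by
  have hβ := logScale_pos hp
  obtain ⟨C, hC⟩ := exists_abs_levelOffset_meanLevel_le hp hα hα1 hx
  set b := logSpread p * x / logScale p with hb
  refine ⟨1 + (C / logScale p + 1 + |b| * (|b| + (C / logScale p + 1))), ?_⟩
  filter_upwards [hC, eventually_ge_atTop 1] with y hoffset hy
  set K := meanLevel p α y
  set s := √(log y / logScale p)
  set t := √((K : ℝ) + 1)
  have hs : s ^ 2 = log y / logScale p := sq_sqrt (div_nonneg (log_nonneg hy) hβ.le)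
  have ht : t ^ 2 = K + 1 := sq_sqrt (by positivity)
  have hdiv : s ^ 2 - t ^ 2 - b * t = levelOffset p x K (log y) / logScale p - 1 := by
    rw [hs, ht, levelOffset, walkScale, div_inv_eq_mul, hb]
    field_simp
    ring
  have hbound : |s ^ 2 - t ^ 2 - b * t| ≤ C / logScale p + 1 := by
    rw [hdiv]
    refine (abs_sub _ _).trans ?_
    rw [abs_div, abs_of_pos hβ, abs_one]
    gcongr
  have hinv := abs_sq_sub_le_of_abs_le (sqrt_nonneg _) (one_le_sqrt.mpr (by simp)) hbound
  rw [fillupCenter_eq_sq_sub hp x hy]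
  calc |(K : ℝ) - (s ^ 2 - b * s)| = |-1 + (t ^ 2 - (s ^ 2 - b * s))| := by rw [ht]; ring_nf
    _ ≤ 1 + (C / logScale p + 1 + |b| * (|b| + (C / logScale p + 1))) := by
        refine (abs_add_le _ _).trans ?_
        rw [abs_neg, abs_one]
        gcongr

lemma exists_level_near_fillupCenter : ∃ c > 0, ∃ C, ∃ k : ℝ → ℕ,
    (∀ y ≥ 1, |k y - fillupCenter p x y| ≤ C) ∧
    ∀ᶠ y in atTop, α + c * walkScale (k y + 2) ≤ meanFill p (k y) y ∧
      meanFill p (k y + 2) y ≤ α - c * walkScale (k y + 2) := by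
  obtain ⟨c, hc, hdrop⟩ := exists_meanFill_two_step_drop hp hα hα1 hx
  obtain ⟨C, hC⟩ := exists_abs_meanLevel_sub_fillupCenter_le hp hα hα1 hx
  obtain ⟨D, hD⟩ := exists_abs_natCast_sub_fillupCenter_le hp x
  choose! l hl using hD
  have hlarge : ∀ᶠ y in atTop, ∃ k : ℕ, |k - fillupCenter p x y| ≤ C + 1 ∧
      α + c * walkScale (k + 2) ≤ meanFill p k y ∧
      meanFill p (k + 2) y ≤ α - c * walkScale (k + 2) := by
    filter_upwards [hdrop, hC] with y ⟨k, hkK, hKk, hk⟩ hy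
    have hkK' : (k : ℝ) ≤ meanLevel p α y := by exact_mod_cast hkK
    have hKk' : (meanLevel p α y : ℝ) ≤ k + 1 := by exact_mod_cast hKk
    have hy := abs_le.mp hy
    exact ⟨k, abs_le.mpr ⟨by linarith, by linarith⟩, hk⟩
  obtain ⟨k, hk⟩ := hlarge.choice
  refine ⟨c, hc, max (C + 1) D,
    fun y ↦ if |k y - fillupCenter p x y| ≤ C + 1 then k y else l y, fun y hy ↦ ?_, ?_⟩
  · beta_reduce
    split_ifs with hy1
    exacts [le_max_of_le_left hy1, le_max_of_le_right (hl y hy)]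
  · filter_upwards [hk] with y hy
    rw [if_pos hy.1]
    exact hy.2

end FillupCenter

section Concentration

variable {p α : ℝ} {ν : Measure (ℕ → ℕ → Bool)}

lemma tendsto_chebyshev_error (c : ℝ) :
    Tendsto (fun k ↦ 1 / 2 ^ k / (c * walkScale (k + 2)) ^ 2) atTop (nhds 0) := by
  have hlin : Tendsto (fun k : ℕ ↦ (k : ℝ) / 2 ^ k) atTop (nhds 0) := by
    simpa using tendsto_pow_const_div_const_pow_of_one_lt 1 (one_lt_two (α := ℝ))
  have hconst : Tendsto (fun k : ℕ ↦ (1 : ℝ) / 2 ^ k) atTop (nhds 0) := by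
    simpa using tendsto_pow_const_div_const_pow_of_one_lt 0 (one_lt_two (α := ℝ))
  have hsum := (hlin.add (hconst.const_mul 3)).div_const (c ^ 2)
  rw [mul_zero, add_zero, zero_div] at hsum
  refine hsum.congr fun k ↦ ?_
  rw [mul_pow, walkScale, inv_pow, sq_sqrt (by positivity)]
  push_cast
  rw [div_mul_eq_div_div, div_inv_eq_mul]
  ring

lemma tendsto_poModel_fillupLevelPo (hp : p ∈ Set.Ioo (0 : ℝ) 1) (hν : IIDBits p ν) {c : ℝ}
    (hc : 0 < c) {k : NNReal → ℕ} (hk : Tendsto k atTop atTop)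
    (hdrop : ∀ᶠ lam in atTop, α + c * walkScale (k lam + 2) ≤ meanFill p (k lam) lam ∧
      meanFill p (k lam + 2) lam ≤ α - c * walkScale (k lam + 2)) :
    Tendsto (fun lam ↦
        poModel lam ν {ω | fillupLevelPo α ω = k lam ∨ fillupLevelPo α ω = k lam + 1})
      atTop (nhds 1) := by
  have := hν.1
  have hlower : Tendsto (fun lam ↦ ENNReal.ofReal
      (1 - 2 * (1 / 2 ^ k lam / (c * walkScale (k lam + 2)) ^ 2))) atTop (nhds 1) := by
    simpa using ENNReal.tendsto_ofReal
      ((((tendsto_chebyshev_error c).comp hk).const_mul 2).const_sub 1)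
  refine tendsto_of_tendsto_of_tendsto_of_le_of_le' hlower tendsto_const_nhds ?_
    (Eventually.of_forall fun _ ↦ prob_le_one)
  filter_upwards [hdrop] with lam hlam
  rw [ENNReal.ofReal_le_iff_le_toReal (measure_ne_top _ _)]
  exact one_sub_le_poModel_real_fillupLevelPo hp hν lam (mul_pos hc (walkScale_pos _)) hlam.1 hlam.2

end Concentration

/-- Theorem 2 of Janson–Szpankowski: two-point concentration of the α-fillup level in the
Poissonized model. -/
theorem fillupLevelPo_two_point_concentration
    (p q α : ℝ) (hp : 0 < p) (hp1 : p < 1) (hq : q = 1 - p) (hα : 0 < α) (hα1 : α < 1)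
    (ν : Measure (ℕ → ℕ → Bool)) (hν : IIDBits p ν)
    (xα : ℝ) (hxα : ProbabilityTheory.cdf (ProbabilityTheory.gaussianReal 0 1) xα = α) :
    ∃ C > (0 : ℝ), ∃ kl : NNReal → ℕ,
      (∀ lam : NNReal, 2 ≤ lam →
        |(kl lam : ℝ) -
            (Real.logb (1 / Real.sqrt (p * q)) lam -
              |Real.log (p / q)| / (2 * Real.log (1 / Real.sqrt (p * q)) ^ ((3 : ℝ) / 2))
                * xα * Real.sqrt (Real.log lam))| ≤ C) ∧
      Tendsto
        (fun lam : NNReal =>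
          poModel lam ν
            {ω | fillupLevelPo α ω = kl lam ∨ fillupLevelPo α ω = kl lam + 1})
        atTop (nhds 1) := by
  subst hq
  obtain ⟨c, hc, C, k, hcenter, hdrop⟩ := exists_level_near_fillupCenter ⟨hp, hp1⟩ hα hα1 hxα
  have hcoe : Tendsto ((↑) : NNReal → ℝ) atTop atTop := NNReal.tendsto_coe_atTop.mpr tendsto_id
  have hk : Tendsto k atTop atTop := by
    rw [← tendsto_natCast_atTop_iff (R := ℝ)]
    refine tendsto_atTop_mono' _ ?_ (tendsto_atTop_add_const_right _ (-C)
      (tendsto_fillupCenter ⟨hp, hp1⟩ xα))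
    filter_upwards [eventually_ge_atTop 1] with y hy
    linarith [(abs_le.mp (hcenter y hy)).1]
  refine ⟨max C 1, by positivity, fun lam ↦ k lam, fun lam hlam ↦ ?_,
    tendsto_poModel_fillupLevelPo ⟨hp, hp1⟩ hν hc (hk.comp hcoe) (hcoe.eventually hdrop)⟩
  have hlam1 : (1 : ℝ) ≤ lam := by exact_mod_cast one_le_two.trans hlam
  exact (hcenter lam hlam1).trans (le_max_left C 1)
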